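/- arXiv:2310.14582 — 2 statements merged into one kernel-verified Lean document; each statement's English description precedes it below -/
import Mathlib

section
/- Let A₁ ⊆ A be a subalgebra with 1_B ∈ A₁ and F₁ ⊆ F a subalgebra. Then the pair (A₁, F₁) is cyclic-antimonotone independent (with respect to (φ, Φ)) if and only if the two unital subalgebras A₁ and ℂ·1_B + F₁ of B are infinitesimally free with respect to (φ, φ′). -/
open scoped BigOperators

namespace TypeBPrime

variable {B : Type*} [Ring B] [Algebra ℂ B]

/-- The alternating word `a 0 * (f 0 * a 1) * ⋯ * (f (n-1) * a n)`. -/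
def altWord {n : ℕ} (a : Fin (n + 1) → B) (f : Fin n → B) : B :=
  a 0 * (List.ofFn fun k : Fin n => f k * a k.succ).prod

/-- Cyclic-antimonotone independence of the pair `(A₁, F₁)` with respect to `(φ, Φ)`:
`Φ(a₀ f₁ a₁ ⋯ fₙ aₙ) = φ(a₀ aₙ) · φ(a₁) ⋯ φ(a_{n-1}) · Φ(f₁ ⋯ fₙ)` for all `n ≥ 1`. -/
def CyclicAntimonotone (φ Φ : B → ℂ) (A₁ F₁ : Set B) : Prop :=
  ∀ n : ℕ, 0 < n → ∀ (a : Fin (n + 1) → B) (f : Fin n → B),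
    (∀ k, a k ∈ A₁) → (∀ k, f k ∈ F₁) →
    Φ (altWord a f) =
      φ (a 0 * a (Fin.last n)) *
        (∏ k ∈ Finset.Ioo (0 : Fin (n + 1)) (Fin.last n), φ (a k)) *
        Φ (List.ofFn f).prod

/-- Freeness of a family of subsets with respect to `φ`:
alternating words in centered elements are centered. -/
def IsFreeFamily {ι : Type*} (φ : B → ℂ) (Alg : ι → Set B) : Prop :=
  ∀ (n : ℕ) (idx : Fin (n + 1) → ι) (a : Fin (n + 1) → B),
    (∀ k : Fin n, idx k.castSucc ≠ idx k.succ) →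
    (∀ k, a k ∈ Alg (idx k)) → (∀ k, φ (a k) = 0) →
    φ (List.ofFn a).prod = 0

/-- Infinitesimal freeness of a family of subsets with respect to `(φ, φ')`. -/
def IsInfFree {ι : Type*} (φ φ' : B → ℂ) (Alg : ι → Set B) : Prop :=
  IsFreeFamily φ Alg ∧
  (∀ (n : ℕ) (idx : Fin (n + 1) → ι) (b : Fin (n + 1) → B),
    (∀ k : Fin n, idx k.castSucc ≠ idx k.succ) →
    (∀ k, b k ∈ Alg (idx k)) → (∀ k, φ (b k) = 0) →
    ¬(Even n ∧ ∀ k, idx k = idx k.rev) →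
    φ' (List.ofFn b).prod = 0) ∧
  (∀ (m : ℕ) (idx : Fin (2 * m + 1) → ι) (b : Fin (2 * m + 1) → B),
    (∀ k : Fin (2 * m), idx k.castSucc ≠ idx k.succ) →
    (∀ k, b k ∈ Alg (idx k)) → (∀ k, φ (b k) = 0) →
    (∀ k, idx k = idx k.rev) →
    φ' (List.ofFn b).prod =
      (∏ j : Fin m,
          φ (b (Fin.castLE (by omega) j) * b (Fin.castLE (by omega) j).rev)) *
        φ' (b ⟨m, by omega⟩))

/-- Trivial independence with respect to `Φ`: alternating words of length `≥ 2` vanish. -/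
def TrivIndep {ι : Type*} (Φ : B → ℂ) (Fj : ι → Set B) : Prop :=
  ∀ (n : ℕ) (idx : Fin (n + 2) → ι) (f : Fin (n + 2) → B),
    (∀ k : Fin (n + 1), idx k.castSucc ≠ idx k.succ) →
    (∀ k, f k ∈ Fj (idx k)) →
    Φ (List.ofFn f).prod = 0

/-- Boolean independence with respect to `ψ`. -/
def BoolIndep {ι : Type*} (ψ : B → ℂ) (C : ι → Set B) : Prop :=
  ∀ (n : ℕ) (idx : Fin (n + 1) → ι) (c : Fin (n + 1) → B),
    (∀ k : Fin n, idx k.castSucc ≠ idx k.succ) →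
    (∀ k, c k ∈ C (idx k)) →
    ψ (List.ofFn c).prod = ∏ k, ψ (c k)

/-- Conditional freeness with respect to `(φ, ψ)`. -/
def CFree {ι : Type*} (φ ψ : B → ℂ) (Alg : ι → Set B) : Prop :=
  IsFreeFamily φ Alg ∧
  ∀ (n : ℕ) (idx : Fin (n + 1) → ι) (b : Fin (n + 1) → B),
    (∀ k : Fin n, idx k.castSucc ≠ idx k.succ) →
    (∀ k, b k ∈ Alg (idx k)) → (∀ k, φ (b k) = 0) →
    ψ (List.ofFn b).prod = ∏ k, ψ (b k)

/-- The unital subspace `ℂ·1_B + F₁`. -/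
def unitize (F₁ : Set B) : Set B :=
  {x | ∃ c : ℂ, ∃ f ∈ F₁, x = algebraMap ℂ B c + f}

/-- The set of alternating words `a₀ f₁ a₁ ⋯ fₙ aₙ` with letters from `A₁` and `F₁`. -/
def wordSet (A₁ F₁ : Set B) : Set B :=
  {x | ∃ n : ℕ, 0 < n ∧ ∃ (a : Fin (n + 1) → B) (f : Fin n → B),
    (∀ k, a k ∈ A₁) ∧ (∀ k, f k ∈ F₁) ∧ x = altWord a f}

/-- `A₁⟨F₁⟩₀`: the linear span of all alternating words `a₀ f₁ a₁ ⋯ fₙ aₙ`. -/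
def wordSpan (A₁ F₁ : Set B) : Set B :=
  (Submodule.span ℂ (wordSet A₁ F₁) : Submodule ℂ B)

/-- The type B′ subalgebra `A₁⟨F₁⟩ = A₁ + A₁⟨F₁⟩₀`. -/
def typeBSub (A₁ F₁ : Set B) : Set B :=
  {x | ∃ a ∈ A₁, ∃ f ∈ wordSpan A₁ F₁, x = a + f}

/-- `(tₙ)` is the inverse Markov–Krein transform of the sequence `(mₙ)`:
`(n+1)·mₙ = Σ_{j=0}^{n} tⱼ m_{n−j}` for all `n ≥ 0`. -/
def IsInvMK (m t : ℕ → ℂ) : Prop :=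
  ∀ n : ℕ, ((n : ℂ) + 1) * m n = ∑ j ∈ Finset.range (n + 1), t j * m (n - j)

/-- Product of `p.1 * p.2` over a list of pairs. -/
def apr (L : List (B × B)) : B := (L.map fun p => p.1 * p.2).prod

@[simp] theorem apr_nil : apr ([] : List (B × B)) = 1 := by simp [apr]

@[simp] theorem apr_cons (p : B × B) (L : List (B × B)) :
    apr (p :: L) = p.1 * p.2 * apr L := by simp [apr]

@[simp] theorem apr_append (L M : List (B × B)) :
    apr (L ++ M) = apr L * apr M := by simp [apr]

/-- List version of cyclic-antimonotone independence. -/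
def CycL (φ Φ : B →ₗ[ℂ] ℂ) (A₁ : Subalgebra ℂ B) (F₁ : NonUnitalSubalgebra ℂ B) : Prop :=
  ∀ x ∈ A₁, ∀ z ∈ A₁, ∀ f ∈ F₁, ∀ L : List (B × B), (∀ p ∈ L, p.1 ∈ A₁ ∧ p.2 ∈ F₁) →
    Φ (x * f * apr L * z) =
      φ (x * z) * (L.map fun p => φ p.1).prod * Φ (f * (L.map fun p => p.2).prod)

theorem shift_prod (m : ℕ) : ∀ (a : Fin (m + 2) → B) (f : Fin (m + 1) → B),
    (List.ofFn fun k : Fin (m + 1) => f k * a k.succ).prod =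
      f 0 * (List.ofFn fun k : Fin m => a k.succ.castSucc * f k.succ).prod
        * a (Fin.last (m + 1)) := by
  induction m with
  | zero => intro a f; simp
  | succ m ih =>
    intro a f
    have := ih (fun k => a k.succ) (fun k => f k.succ)
    rw [List.ofFn_succ, List.prod_cons, this, List.ofFn_succ (n := m), List.prod_cons]
    simp [mul_assoc]

theorem altWord_eq (m : ℕ) (a : Fin (m + 2) → B) (f : Fin (m + 1) → B) :
    altWord a f = a 0 * f 0 * apr (List.ofFn fun k : Fin m => (a k.succ.castSucc, f k.succ))
        * a (Fin.last (m + 1)) := by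
  rw [altWord, shift_prod, apr, List.map_ofFn]
  simp [mul_assoc, Function.comp_def]

theorem ioo_prod (m : ℕ) (g : Fin (m + 2) → ℂ) :
    ∏ k ∈ Finset.Ioo (0 : Fin (m + 2)) (Fin.last (m + 1)), g k =
      ∏ k : Fin m, g k.succ.castSucc := by
  have h : Finset.Ioo (0 : Fin (m + 2)) (Fin.last (m + 1)) =
      (Finset.univ : Finset (Fin m)).map
        ((Fin.succEmb m).trans Fin.castSuccEmb) := by
    ext k
    simp only [Finset.mem_Ioo, Finset.mem_map, Finset.mem_univ, true_and]
    constructor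
    · rintro ⟨h1, h2⟩
      rw [Fin.lt_def] at h1 h2
      simp at h1 h2
      exact ⟨⟨k.1 - 1, by omega⟩, by ext; simp; omega⟩
    · rintro ⟨j, rfl⟩
      rw [Fin.lt_def, Fin.lt_def]
      simp
  rw [h, Finset.prod_map]
  rfl

theorem cyc_iff (φ Φ : B →ₗ[ℂ] ℂ) (A₁ : Subalgebra ℂ B) (F₁ : NonUnitalSubalgebra ℂ B) :
    CyclicAntimonotone ⇑φ ⇑Φ (A₁ : Set B) (F₁ : Set B) ↔ CycL φ Φ A₁ F₁ := by
  constructor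
  · intro h x hx z hz f hf L
    induction L using List.ofFnRec with
    | h m g =>
    intro hL
    rw [List.forall_mem_ofFn_iff] at hL
    have := h (m + 1) (Nat.succ_pos _)
      (Fin.cons x (Fin.snoc (fun k => (g k).1) z : Fin (m + 1) → B))
      (Fin.cons f (fun k => (g k).2)) ?_ ?_
    · rw [altWord_eq, ioo_prod, List.ofFn_succ] at this
      simpa [← Fin.succ_castSucc, ← Fin.succ_last, List.map_ofFn, Function.comp_def,
        List.prod_ofFn] using this
    · intro k
      refine Fin.cases ?_ (fun k => ?_) k
      · simpa using hx
      · refine Fin.lastCases ?_ (fun k => ?_) k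
        · simpa using hz
        · simpa using (hL k).1
    · intro k
      refine Fin.cases ?_ (fun k => ?_) k
      · simpa using hf
      · simpa using (hL k).2
  · intro h n hn a f ha hf
    obtain ⟨m, rfl⟩ : ∃ m, n = m + 1 := ⟨n - 1, by omega⟩
    rw [altWord_eq, ioo_prod, h _ (ha _) _ (ha _) _ (hf _) _
      (by rw [List.forall_mem_ofFn_iff]; exact fun k => ⟨ha _, hf _⟩), List.ofFn_succ (f := f)]
    simp [List.map_ofFn, Function.comp_def, List.prod_ofFn]

/-- Admissible centered letters. -/
def Good (φ : B →ₗ[ℂ] ℂ) (A₁ : Subalgebra ℂ B) (F₁ : NonUnitalSubalgebra ℂ B)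
    (p : Bool × B) : Prop :=
  (p.1 = true → p.2 ∈ A₁ ∧ φ p.2 = 0) ∧ (p.1 = false → p.2 ∈ F₁)

/-- Vanishing of long alternating words. -/
def ZL (φ φ' : B →ₗ[ℂ] ℂ) (A₁ : Subalgebra ℂ B) (F₁ : NonUnitalSubalgebra ℂ B) : Prop :=
  ∀ l : List (Bool × B), l.IsChain (fun p q => p.1 ≠ q.1) → (∀ p ∈ l, Good φ A₁ F₁ p) →
    2 ≤ l.length → ¬(l.length = 3 ∧ ∃ x t, l = (true, x) :: t) →
    φ' (l.map fun p => p.2).prod = 0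

/-- The words of length three. -/
def E3 (φ φ' : B →ₗ[ℂ] ℂ) (A₁ : Subalgebra ℂ B) (F₁ : NonUnitalSubalgebra ℂ B) : Prop :=
  ∀ x ∈ A₁, ∀ f ∈ F₁, ∀ z ∈ A₁, φ x = 0 → φ z = 0 → φ' (x * f * z) = φ (x * z) * φ' f

theorem vanish_left (φ Φ : B →ₗ[ℂ] ℂ) (hφ1 : φ 1 = 1)
    (A₁ : Subalgebra ℂ B) (F₁ : NonUnitalSubalgebra ℂ B)
    (h0 : ∀ x ∈ A₁, ∀ z ∈ A₁, ∀ f ∈ F₁, ∀ L : List (B × B), L ≠ [] →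
      (∀ p ∈ L, p.1 ∈ F₁ ∧ p.2 ∈ A₁ ∧ φ p.2 = 0) → Φ (x * apr L * f * z) = 0)
    (x : B) (hx : x ∈ A₁) (z : B) (hz : z ∈ A₁) (M : List (B × B)) :
    (∀ p ∈ M, p.1 ∈ A₁ ∧ p.2 ∈ F₁) →
    ∀ f ∈ F₁, ∀ L : List (B × B), L ≠ [] →
      (∀ p ∈ L, p.1 ∈ F₁ ∧ p.2 ∈ A₁ ∧ φ p.2 = 0) →
      Φ (x * apr L * f * apr M * z) = 0 := by
  induction M with
  | nil =>
    intro _ f hf L hL hL'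
    simpa using h0 x hx z hz f hf L hL hL'
  | cons p M ih =>
    intro hM f hf L hL hL'
    obtain ⟨a, g⟩ := p
    have hp := hM (a, g) (by simp)
    have hM' : ∀ p ∈ M, p.1 ∈ A₁ ∧ p.2 ∈ F₁ := fun p hp => hM p (by simp [hp])
    have e1 := ih hM' (f * g) (mul_mem hf hp.2) L hL hL'
    have e2 := ih hM' g hp.2 (L ++ [(f, a - algebraMap ℂ B (φ a))]) (by simp) (by
      intro q hq
      rw [List.mem_append] at hq
      rcases hq with hq | hq
      · exact hL' q hq
      · simp only [List.mem_singleton] at hq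
        subst hq
        refine ⟨hf, sub_mem hp.1 (A₁.algebraMap_mem _), ?_⟩
        simp [Algebra.algebraMap_eq_smul_one, hφ1])
    have e : x * apr L * f * apr ((a, g) :: M) * z =
        φ a • (x * apr L * (f * g) * apr M * z) +
          x * apr (L ++ [(f, a - algebraMap ℂ B (φ a))]) * g * apr M * z := by
      simp [Algebra.algebraMap_eq_smul_one, mul_sub, sub_mul, mul_assoc]
    rw [e, map_add, map_smul, e1, e2]
    simp

theorem cycL_of (φ Φ : B →ₗ[ℂ] ℂ) (hφ1 : φ 1 = 1)
    (A₁ : Subalgebra ℂ B) (F₁ : NonUnitalSubalgebra ℂ B)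
    (h0 : ∀ x ∈ A₁, ∀ z ∈ A₁, ∀ f ∈ F₁, ∀ L : List (B × B), L ≠ [] →
      (∀ p ∈ L, p.1 ∈ F₁ ∧ p.2 ∈ A₁ ∧ φ p.2 = 0) → Φ (x * apr L * f * z) = 0)
    (h1 : ∀ x ∈ A₁, ∀ z ∈ A₁, ∀ f ∈ F₁, Φ (x * f * z) = φ (x * z) * Φ f) :
    CycL φ Φ A₁ F₁ := by
  intro x hx z hz f hf L
  induction L generalizing f with
  | nil => intro _; simpa using h1 x hx z hz f hf
  | cons p M ih =>
    intro hM
    obtain ⟨a, g⟩ := p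
    have hp := hM (a, g) (by simp)
    have hM' : ∀ p ∈ M, p.1 ∈ A₁ ∧ p.2 ∈ F₁ := fun p hp => hM p (by simp [hp])
    have e1 := ih (f * g) (mul_mem hf hp.2) hM'
    have e2 := vanish_left φ Φ hφ1 A₁ F₁ h0 x hx z hz M hM' g hp.2
      [(f, a - algebraMap ℂ B (φ a))] (by simp) (by
        intro q hq
        simp only [List.mem_singleton] at hq
        subst hq
        refine ⟨hf, sub_mem hp.1 (A₁.algebraMap_mem _), ?_⟩
        simp [Algebra.algebraMap_eq_smul_one, hφ1])
    have e : x * f * apr ((a, g) :: M) * z =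
        φ a • (x * (f * g) * apr M * z) +
          x * apr [(f, a - algebraMap ℂ B (φ a))] * g * apr M * z := by
      simp [Algebra.algebraMap_eq_smul_one, mul_sub, sub_mul, mul_assoc]
    rw [e, map_add, map_smul, e1, e2]
    simp only [List.map_cons, List.prod_cons, smul_eq_mul, mul_assoc]
    ring

/-- Letters of a word. -/
def fl : List (B × B) → List (Bool × B)
  | [] => []
  | p :: L => (false, p.1) :: (true, p.2) :: fl L

theorem fl_prod (L : List (B × B)) : ((fl L).map fun p => p.2).prod = apr L := by
  induction L with
  | nil => simp [fl]
  | cons p L ih => simp [fl, ih, mul_assoc]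

theorem fl_good (φ : B →ₗ[ℂ] ℂ) (A₁ : Subalgebra ℂ B) (F₁ : NonUnitalSubalgebra ℂ B)
    (L : List (B × B)) (hL : ∀ p ∈ L, p.1 ∈ F₁ ∧ p.2 ∈ A₁ ∧ φ p.2 = 0) :
    ∀ p ∈ fl L, Good φ A₁ F₁ p := by
  induction L with
  | nil => simp [fl]
  | cons p L ih =>
    have := hL p (by simp)
    have ih := ih (fun q hq => hL q (by simp [hq]))
    intro q hq
    simp only [fl, List.mem_cons] at hq
    rcases hq with rfl | rfl | hq
    · simp [Good, this]
    · simp [Good, this]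
    · exact ih q hq

theorem fl_chain (L : List (B × B)) (f : B) (t : List (Bool × B))
    (ht : ((false, f) :: t).IsChain (fun p q => p.1 ≠ q.1)) (x : B) :
    ((true, x) :: (fl L ++ (false, f) :: t)).IsChain (fun p q => p.1 ≠ q.1) := by
  induction L generalizing x with
  | nil => simpa [fl] using ht
  | cons p L ih =>
    have := ih p.2
    simp only [fl, List.cons_append, List.isChain_cons_cons]
    exact ⟨by simp, by simp, this⟩

theorem fl_length (L : List (B × B)) : (fl L).length = 2 * L.length := by
  induction L with
  | nil => simp [fl]
  | cons p L ih => simp [fl, ih]; ring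

theorem cycL_of_ZL (F : Submodule ℂ B)
    (hFmulL : ∀ b : B, ∀ f ∈ F, b * f ∈ F)
    (hFmulR : ∀ b : B, ∀ f ∈ F, f * b ∈ F)
    (φ Φ φ' : B →ₗ[ℂ] ℂ) (hφ1 : φ 1 = 1) (hφ'F : ∀ f ∈ F, φ' f = Φ f)
    (A₁ : Subalgebra ℂ B) (F₁ : NonUnitalSubalgebra ℂ B) (hF₁F : ∀ f ∈ F₁, f ∈ F)
    (hZ : ZL φ φ' A₁ F₁) (hE : E3 φ φ' A₁ F₁) : CycL φ Φ A₁ F₁ := by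
  have dec : ∀ x ∈ A₁, ∃ c : ℂ, ∃ y ∈ A₁, φ y = 0 ∧ φ x = c ∧ x = c • 1 + y := by
    intro x hx
    refine ⟨φ x, x - φ x • 1, sub_mem hx (A₁.smul_mem A₁.one_mem _), ?_, rfl, ?_⟩
    · simp [hφ1]
    · simp
  apply cycL_of φ Φ hφ1
  · intro x hx z hz f hf L hL hL'
    obtain ⟨c, y, hy, hy0, -, rfl⟩ := dec x hx
    obtain ⟨d, w, hw, hw0, -, rfl⟩ := dec z hz
    have hlen : 2 ≤ (fl L).length := by
      have := List.length_pos_of_ne_nil hL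
      rw [fl_length]; omega
    have hg := fl_good φ A₁ F₁ L hL'
    have gf : Good φ A₁ F₁ (false, f) := by simp [Good, hf]
    have gy : Good φ A₁ F₁ (true, y) := by simp [Good, hy, hy0]
    have gw : Good φ A₁ F₁ (true, w) := by simp [Good, hw, hw0]
    have c1 := fl_chain L f [] (by simp) y
    have c2 := fl_chain L f [(true, w)] (by simp) y
    have hnt : ∀ t, ¬ ∃ x t', fl L ++ t = (true, x) :: t' := by
      rintro t ⟨x, t', h⟩
      cases L with
      | nil => exact hL rfl
      | cons p L => simp [fl] at h
    have k1 := hZ _ c1 (by simp only [List.mem_cons, List.mem_append]; grind)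
      (by simp) (by simp; omega)
    have k2 := hZ _ c2 (by simp only [List.mem_cons, List.mem_append]; grind)
      (by simp) (by simp only [List.length_cons, List.length_append]; omega)
    have k3 := hZ _ c1.tail (by simp only [List.tail_cons, List.mem_cons, List.mem_append]; grind)
      (by simp; omega) (by exact fun h => hnt _ h.2)
    have k4 := hZ _ c2.tail (by simp only [List.tail_cons, List.mem_cons, List.mem_append]; grind)
      (by simp) (by exact fun h => hnt _ h.2)
    simp only [List.tail_cons, List.map_cons, List.map_append, List.prod_cons, List.prod_append,
      fl_prod, List.map_nil, List.prod_nil, mul_one] at k1 k2 k3 k4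
    have hfF := hF₁F f hf
    rw [hφ'F _ (hFmulL _ _ (hFmulL _ _ hfF))] at k1
    rw [hφ'F _ (hFmulL _ _ (hFmulL _ _ (hFmulR _ _ hfF)))] at k2
    rw [hφ'F _ (hFmulL _ _ hfF)] at k3
    rw [hφ'F _ (hFmulL _ _ (hFmulR _ _ hfF))] at k4
    simp [add_mul, mul_add, mul_assoc, k1, k2, k3, k4]
  · intro x hx z hz f hf
    obtain ⟨c, y, hy, hy0, -, rfl⟩ := dec x hx
    obtain ⟨d, w, hw, hw0, -, rfl⟩ := dec z hz
    have gf : Good φ A₁ F₁ (false, f) := by simp [Good, hf]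
    have gy : Good φ A₁ F₁ (true, y) := by simp [Good, hy, hy0]
    have gw : Good φ A₁ F₁ (true, w) := by simp [Good, hw, hw0]
    have hfF := hF₁F f hf
    have k1 := hZ [(true, y), (false, f)] (by simp) (by simp [gf, gy]) (by simp) (by simp)
    have k2 := hZ [(false, f), (true, w)] (by simp) (by simp [gf, gw]) (by simp) (by simp)
    have k3 := hE y hy f hf w hw hy0 hw0
    rw [hφ'F _ (hFmulR _ _ (hFmulL _ _ hfF)), hφ'F _ hfF] at k3
    simp only [List.map_cons, List.prod_cons, List.map_nil, List.prod_nil, mul_one] at k1 k2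
    rw [hφ'F _ (hFmulL _ _ hfF)] at k1
    rw [hφ'F _ (hFmulR _ _ hfF)] at k2
    rw [mul_assoc] at k3
    simp [add_mul, mul_add, mul_assoc, k1, k2, k3, hφ1, hy0, hw0]

theorem word_form (φ : B →ₗ[ℂ] ℂ) (A₁ : Subalgebra ℂ B) (F₁ : NonUnitalSubalgebra ℂ B)
    (l : List (Bool × B)) (hl : ∀ p ∈ l, Good φ A₁ F₁ p) :
    ∃ L : List (B × B), ∃ z ∈ A₁, (∀ p ∈ L, p.1 ∈ A₁ ∧ p.2 ∈ F₁) ∧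
      (l.map fun p => p.2).prod = apr L * z := by
  induction l using List.reverseRecOn with
  | nil => exact ⟨[], 1, A₁.one_mem, by simp, by simp⟩
  | append_singleton l p ih =>
    obtain ⟨L, z, hz, hL, e⟩ := ih (fun q hq => hl q (by simp [hq]))
    have hp := hl p (by simp)
    obtain ⟨i, b⟩ := p
    cases i with
    | true =>
      exact ⟨L, z * b, mul_mem hz (hp.1 rfl).1, hL, by simp [e, mul_assoc]⟩
    | false =>
      refine ⟨L ++ [(z, b)], 1, A₁.one_mem, ?_, by simp [e, mul_assoc]⟩
      intro q hq
      rw [List.mem_append, List.mem_singleton] at hq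
      rcases hq with hq | rfl
      · exact hL q hq
      · exact ⟨hz, hp.2 rfl⟩

theorem ZL_of_cycL (F : Submodule ℂ B)
    (hFmulL : ∀ b : B, ∀ f ∈ F, b * f ∈ F)
    (hFmulR : ∀ b : B, ∀ f ∈ F, f * b ∈ F)
    (φ Φ φ' : B →ₗ[ℂ] ℂ) (hφ'F : ∀ f ∈ F, φ' f = Φ f)
    (A₁ : Subalgebra ℂ B) (F₁ : NonUnitalSubalgebra ℂ B) (hF₁F : ∀ f ∈ F₁, f ∈ F)
    (h : CycL φ Φ A₁ F₁) : ZL φ φ' A₁ F₁ ∧ E3 φ φ' A₁ F₁ := by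
  have key : ∀ x ∈ A₁, ∀ f ∈ F₁, ∀ a ∈ A₁, φ a = 0 → ∀ g ∈ F₁, ∀ l : List (Bool × B),
      (∀ p ∈ l, Good φ A₁ F₁ p) →
      φ' (x * (f * (a * (g * (l.map fun p => p.2).prod)))) = 0 := by
    intro x hx f hf a ha ha0 g hg l hl
    obtain ⟨L, z, hz, hL, e⟩ := word_form φ A₁ F₁ l hl
    rw [hφ'F _ (hFmulL _ _ (hFmulR _ _ (hF₁F f hf))), e]
    have := h x hx z hz f hf ((a, g) :: L) (by
      intro p hp
      rw [List.mem_cons] at hp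
      rcases hp with rfl | hp
      · exact ⟨ha, hg⟩
      · exact hL p hp)
    simpa [mul_assoc, ha0] using this
  have one : ∀ x ∈ A₁, ∀ f ∈ F₁, ∀ z ∈ A₁, φ' (x * (f * z)) = φ (x * z) * φ' f := by
    intro x hx f hf z hz
    rw [hφ'F _ (hFmulL _ _ (hFmulR _ _ (hF₁F f hf))), hφ'F _ (hF₁F f hf)]
    simpa [mul_assoc] using h x hx z hz f hf [] (by simp)
  refine ⟨?_, ?_⟩
  · intro l hc hl hlen hne
    match l, hc, hl, hlen, hne with
    | [(true, a), (false, f)], hc, hl, hlen, hne =>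
      have h1 := hl (true, a) (by simp)
      have h2 := hl (false, f) (by simp)
      simpa [(h1.1 rfl).2] using one a (h1.1 rfl).1 f (h2.2 rfl) 1 A₁.one_mem
    | [(false, f), (true, a)], hc, hl, hlen, hne =>
      have h1 := hl (true, a) (by simp)
      have h2 := hl (false, f) (by simp)
      simpa [(h1.1 rfl).2] using one 1 A₁.one_mem f (h2.2 rfl) a (h1.1 rfl).1
    | (true, x) :: (false, f) :: (true, a) :: (false, g) :: l, hc, hl, hlen, hne =>
      have h1 := hl (true, x) (by simp)
      have h2 := hl (false, f) (by simp)
      have h3 := hl (true, a) (by simp)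
      have h4 := hl (false, g) (by simp)
      simpa using key x (h1.1 rfl).1 f (h2.2 rfl) a (h3.1 rfl).1 (h3.1 rfl).2 g (h4.2 rfl) l
        (fun p hp => hl p (by simp [hp]))
    | (false, f) :: (true, a) :: (false, g) :: l, hc, hl, hlen, hne =>
      have h2 := hl (false, f) (by simp)
      have h3 := hl (true, a) (by simp)
      have h4 := hl (false, g) (by simp)
      simpa using key 1 A₁.one_mem f (h2.2 rfl) a (h3.1 rfl).1 (h3.1 rfl).2 g (h4.2 rfl) l
        (fun p hp => hl p (by simp [hp]))
    | [(true, x), (false, f), (true, z)], hc, hl, hlen, hne =>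
      exact absurd ⟨rfl, _, _, rfl⟩ hne
    | [], hc, hl, hlen, hne => simp at hlen
    | [_], hc, hl, hlen, hne => simp at hlen
    | (true, _) :: (true, _) :: _, hc, hl, hlen, hne => simp at hc
    | (false, _) :: (false, _) :: _, hc, hl, hlen, hne => simp at hc
    | _ :: (true, _) :: (true, _) :: _, hc, hl, hlen, hne => simp at hc
    | _ :: (false, _) :: (false, _) :: _, hc, hl, hlen, hne => simp at hc
    | _ :: _ :: (true, _) :: (true, _) :: _, hc, hl, hlen, hne => simp at hc
  · intro x hx f hf z hz _ _
    rw [mul_assoc]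
    exact one x hx f hf z hz

theorem alt_parity (n : ℕ) (idx : Fin (n + 1) → Bool)
    (h : ∀ k : Fin n, idx k.castSucc ≠ idx k.succ) :
    ∀ k (hk : k < n + 1), idx ⟨k, hk⟩ = (idx 0 ^^ decide (k % 2 = 1)) := by
  intro k
  induction k with
  | zero => intro hk; simp
  | succ k ih =>
    intro hk
    have e := ih (by omega)
    have h' := h ⟨k, by omega⟩
    simp only [Fin.castSucc_mk, Fin.succ_mk] at h'
    rw [e] at h'
    have : decide ((k + 1) % 2 = 1) = !decide (k % 2 = 1) := by
      rw [← decide_not]; congr 1; apply propext; omega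
    rw [this]
    revert h'
    cases idx 0 <;> cases idx ⟨k + 1, hk⟩ <;> cases decide (k % 2 = 1) <;> simp

theorem mem_good (F : Submodule ℂ B) (φ : B →ₗ[ℂ] ℂ) (hφ1 : φ 1 = 1)
    (hφF : ∀ f ∈ F, φ f = 0)
    (A₁ : Subalgebra ℂ B) (F₁ : NonUnitalSubalgebra ℂ B) (hF₁F : ∀ f ∈ F₁, f ∈ F)
    (p : Bool × B) :
    (p.2 ∈ (if p.1 then (A₁ : Set B) else unitize (F₁ : Set B)) ∧ φ p.2 = 0) ↔
      Good φ A₁ F₁ p := by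
  obtain ⟨i, b⟩ := p
  cases i with
  | true => simp [Good]
  | false =>
    simp only [Good, unitize, Bool.false_eq_true, if_false, Set.mem_ofPred_eq, SetLike.mem_coe]
    constructor
    · rintro ⟨⟨c, f, hf, rfl⟩, h0⟩
      have : c = 0 := by
        simpa [Algebra.algebraMap_eq_smul_one, hφ1, hφF f (hF₁F f hf)] using h0
      subst this
      simpa using hf
    · intro h
      exact ⟨⟨0, b, h.2 trivial, by simp⟩, hφF _ (hF₁F _ (h.2 trivial))⟩

theorem prod_mem_F (F : Submodule ℂ B)
    (hFmulL : ∀ b : B, ∀ f ∈ F, b * f ∈ F)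
    (hFmulR : ∀ b : B, ∀ f ∈ F, f * b ∈ F) (l : List B) (b : B) (hb : b ∈ l) (hF : b ∈ F) :
    l.prod ∈ F := by
  obtain ⟨s, t, rfl⟩ := List.append_of_mem hb
  rw [List.prod_append, List.prod_cons]
  exact hFmulL _ _ (hFmulR _ _ hF)

theorem statement2
    {B : Type*} [Ring B] [Algebra ℂ B]
    (A : Subalgebra ℂ B) (F : Submodule ℂ B)
    (hFmulL : ∀ b : B, ∀ f ∈ F, b * f ∈ F)
    (hFmulR : ∀ b : B, ∀ f ∈ F, f * b ∈ F)
    (hAF : ∀ x ∈ A, x ∈ F → x = 0)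
    (hdec : ∀ x : B, ∃ a ∈ A, ∃ f ∈ F, x = a + f)
    (φ Φ φ' : B →ₗ[ℂ] ℂ)
    (hφ1 : φ 1 = 1) (hφF : ∀ f ∈ F, φ f = 0)
    (hφ'A : ∀ a ∈ A, φ' a = 0) (hφ'F : ∀ f ∈ F, φ' f = Φ f)
    (A₁ : Subalgebra ℂ B) (hA₁A : A₁ ≤ A)
    (F₁ : NonUnitalSubalgebra ℂ B) (hF₁F : ∀ f ∈ F₁, f ∈ F) :
    CyclicAntimonotone ⇑φ ⇑Φ (A₁ : Set B) (F₁ : Set B) ↔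
      IsInfFree ⇑φ ⇑φ'
        (fun i : Bool => if i then (A₁ : Set B) else unitize (F₁ : Set B)) := by
  have hgood := mem_good F φ hφ1 hφF A₁ F₁ hF₁F
  rw [cyc_iff]
  constructor
  · intro h
    obtain ⟨hZ, hE⟩ := ZL_of_cycL F hFmulL hFmulR φ Φ φ' hφ'F A₁ F₁ hF₁F h
    have hZf : ∀ (n : ℕ) (idx : Fin (n + 1) → Bool) (b : Fin (n + 1) → B),
        (∀ k : Fin n, idx k.castSucc ≠ idx k.succ) →
        (∀ k, Good φ A₁ F₁ (idx k, b k)) → 1 ≤ n → ¬(n = 2 ∧ idx 0 = true) →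
        φ' (List.ofFn b).prod = 0 := by
      intro n idx b halt hg hn hne
      have := hZ (List.ofFn fun k => (idx k, b k)) ?_ ?_ ?_ ?_
      · simpa [List.map_ofFn, Function.comp_def] using this
      · rw [List.isChain_ofFn]
        intro i hi
        exact halt ⟨i, by omega⟩
      · rw [List.forall_mem_ofFn_iff]; exact hg
      · simpa using hn
      · rintro ⟨h3, x, t, ht⟩
        apply hne
        rw [List.ofFn_succ, List.cons.injEq, Prod.mk.injEq] at ht
        simp at h3
        exact ⟨h3, ht.1.1⟩
    refine ⟨?_, ?_, ?_⟩
    · intro n idx b halt hm h0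
      have hg : ∀ k, Good φ A₁ F₁ (idx k, b k) := fun k => (hgood _).1 ⟨hm k, h0 k⟩
      by_cases hall : ∃ k, idx k = false
      · obtain ⟨k, hk⟩ := hall
        exact hφF _ (prod_mem_F F hFmulL hFmulR _ (b k) (List.mem_ofFn.2 ⟨k, rfl⟩)
          (hF₁F _ ((hg k).2 hk)))
      · push Not at hall
        cases n with
        | zero => simpa using h0 0
        | succ n =>
          exfalso
          apply halt 0
          have h1 := hall (Fin.castSucc 0)
          have h2 := hall (Fin.succ 0)
          simp only [ne_eq, Bool.not_eq_false] at h1 h2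
          rw [h1, h2]
    · intro n idx b halt hm h0 hne
      have hg : ∀ k, Good φ A₁ F₁ (idx k, b k) := fun k => (hgood _).1 ⟨hm k, h0 k⟩
      have hpar := alt_parity n idx halt
      have hodd : ¬ Even n := by
        intro hev
        refine hne ⟨hev, ?_⟩
        rintro ⟨k, hk⟩
        obtain ⟨r, rfl⟩ := hev
        have e : decide (k % 2 = 1) = decide ((r + r + 1 - (k + 1)) % 2 = 1) := by
          congr 1
          apply propext
          omega
        exact (hpar k hk).trans ((congrArg (fun t => idx 0 ^^ t) e).trans
          (hpar (r + r + 1 - (k + 1)) (by omega)).symm)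
      refine hZf n idx b halt hg ?_ ?_
      · rcases Nat.eq_zero_or_pos n with rfl | h
        · simp at hodd
        · exact h
      · rintro ⟨rfl, -⟩
        exact hodd (by decide)
    · intro m idx b halt hm h0 _
      have hg : ∀ k, Good φ A₁ F₁ (idx k, b k) := fun k => (hgood _).1 ⟨hm k, h0 k⟩
      have hpar := alt_parity (2 * m) idx halt
      rcases Nat.eq_zero_or_pos m with rfl | hmp
      · simp
      by_cases h3 : m = 1 ∧ idx 0 = true
      · obtain ⟨rfl, hi0⟩ := h3
        have i1 : idx 1 = false := by simpa [hi0] using hpar 1 (by omega)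
        have i2 : idx 2 = true := by simpa [hi0] using hpar 2 (by omega)
        have := hE (b 0) ((hg 0).1 hi0).1 (b 1) ((hg 1).2 i1) (b 2) ((hg 2).1 i2).1
          (h0 0) (h0 2)
        simp only [Fin.prod_univ_one]
        have e : (List.ofFn b).prod = b 0 * b 1 * b 2 := by
          simp [List.ofFn_succ, mul_assoc]
        rw [e, this]
        rfl
      · rw [hZf (2 * m) idx b halt hg (by omega) (fun h => h3 ⟨by omega, h.2⟩)]
        symm
        apply mul_eq_zero_of_left
        have : ∃ j : Fin m, idx (Fin.castLE (by omega) j) = false := by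
          cases hi : idx 0 with
          | false => exact ⟨⟨0, hmp⟩, hi⟩
          | true =>
            refine ⟨⟨1, by by_contra hc; exact h3 ⟨by omega, hi⟩⟩, ?_⟩
            simpa [hi] using hpar 1 (by omega)
        obtain ⟨j, hj⟩ := this
        apply Finset.prod_eq_zero (Finset.mem_univ j)
        exact hφF _ (hFmulR _ _ (hF₁F _ ((hg _).2 hj)))
  · rintro ⟨-, h2, h3⟩
    refine cycL_of_ZL F hFmulL hFmulR φ Φ φ' hφ1 hφ'F A₁ F₁ hF₁F ?_ ?_
    · intro l
      induction l using List.ofFnRec with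
      | h N g =>
      intro hc hg hlen hne
      rw [List.forall_mem_ofFn_iff] at hg
      simp only [List.length_ofFn] at hlen hne
      obtain ⟨n, rfl⟩ : ∃ n, N = n + 1 := ⟨N - 1, by omega⟩
      have halt : ∀ k : Fin n, (g k.castSucc).1 ≠ (g k.succ).1 := by
        rw [List.isChain_ofFn] at hc
        exact fun k => hc k.1 (by omega)
      have hm := fun k => ((hgood (g k)).2 (hg k)).1
      have h0 := fun k => ((hgood (g k)).2 (hg k)).2
      rw [List.map_ofFn]
      change φ' (List.ofFn fun k => (g k).2).prod = 0
      by_cases hev : Even n ∧ ∀ k, (g k).1 = (g k.rev).1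
      · obtain ⟨⟨m, hmm⟩, hrev⟩ := hev
        obtain rfl : n = 2 * m := by omega
        have hpar := alt_parity (2 * m) (fun k => (g k).1) halt
        rw [h3 m (fun k => (g k).1) (fun k => (g k).2) halt hm h0 hrev]
        by_cases h1 : m = 1 ∧ (g 0).1 = true
        · exfalso
          apply hne
          refine ⟨by omega, (g 0).2, List.ofFn fun k : Fin (2 * m) => g k.succ, ?_⟩
          rw [List.ofFn_succ, ← h1.2]
        · apply mul_eq_zero_of_left
          have : ∃ j : Fin m, (g (Fin.castLE (by omega) j)).1 = false := by
            cases hi : (g 0).1 with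
            | false => exact ⟨⟨0, by omega⟩, hi⟩
            | true =>
              refine ⟨⟨1, by by_contra hc; exact h1 ⟨by omega, hi⟩⟩, ?_⟩
              simpa [hi] using hpar 1 (by omega)
          obtain ⟨j, hj⟩ := this
          apply Finset.prod_eq_zero (Finset.mem_univ j)
          exact hφF _ (hFmulR _ _ (hF₁F _ ((hg _).2 hj)))
      · exact h2 n (fun k => (g k).1) (fun k => (g k).2) halt hm h0 hev
    · intro x hx f hf z hz hx0 hz0
      have hm : ∀ k, Good φ A₁ F₁ (![true, false, true] k, ![x, f, z] k) := by
        intro k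
        fin_cases k <;> simp [Good, hx, hf, hz, hx0, hz0]
      have := h3 1 ![true, false, true] ![x, f, z] (by decide)
        (fun k => ((hgood _).2 (hm k)).1) (fun k => ((hgood _).2 (hm k)).2) (by decide)
      simp only [Fin.prod_univ_one] at this
      have e : (List.ofFn ![x, f, z]).prod = x * f * z := by
        simp [List.ofFn_succ, mul_assoc]
      have this' : φ' (List.ofFn ![x, f, z]).prod = φ (x * z) * φ' f := this
      rw [← e, this']
end TypeBPrime
end

section
/- Let (A_i)_{i∈I} be unital subalgebras of A and (F_j)_{j∈J} subalgebras of F, and let F′ := ℂ·1_B + ⟨F_j : j∈J⟩ be the unital subalgebra of B generated by all the F_j. Then the pair ((A_i)_{i∈I}, (F_j)_{j∈J}) is weakly B′-free in (A, φ, F, Φ) if and only if the family of unital subalgebras of B consisting of A_i (for i ∈ I) together with the single additional subalgebra F′ is infinitesimally free with respect to (φ, φ′). -/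
open scoped BigOperators

namespace TypeBPrime

variable {B : Type*} [Ring B] [Algebra ℂ B]

set_option linter.unusedSectionVars false

/-- Value of a word of labelled letters. -/
def wval {ι : Type*} (w : List (ι × B)) : B := (w.map Prod.snd).prod

/-- Consecutive labels differ. -/
def WAlt {ι : Type*} (w : List (ι × B)) : Prop := w.IsChain (fun x y => x.1 ≠ y.1)

/-- All letters are centered and in the algebra of their label. -/
def WCent {ι : Type*} (φ : B → ℂ) (Alg : ι → Set B) (w : List (ι × B)) : Prop :=
  ∀ x ∈ w, x.2 ∈ Alg x.1 ∧ φ x.2 = 0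

open Classical in
/-- The nested pairing product. -/
noncomputable def DD {ι : Type*} (φ : B → ℂ) : List (ι × B) → List (ι × B) → ℂ
  | [], [] => 1
  | x :: u, y :: v => (if x.1 = y.1 then φ (x.2 * y.2) else 0) * DD φ u v
  | [], _ :: _ => 0
  | _ :: _, [] => 0

@[simp] lemma wval_nil {ι : Type*} : wval ([] : List (ι × B)) = 1 := rfl

@[simp] lemma wval_cons {ι : Type*} (x : ι × B) (w : List (ι × B)) :
    wval (x :: w) = x.2 * wval w := by simp [wval]

@[simp] lemma wval_append {ι : Type*} (v w : List (ι × B)) :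
    wval (v ++ w) = wval v * wval w := by simp [wval]

lemma DD_len {ι : Type*} (φ : B → ℂ) (u v : List (ι × B)) (h : u.length ≠ v.length) :
    DD φ u v = 0 := by
  induction u generalizing v with
  | nil => cases v with
    | nil => simp at h
    | cons y v => rfl
  | cons x u ih => cases v with
    | nil => rfl
    | cons y v =>
      rw [DD, ih v (by simpa using h), mul_zero]

lemma DD_zero {ι : Type*} (φ : B → ℂ) (u v : List (ι × B)) (S : B → Prop)
    (hS : ∀ x y, S x ∨ S y → φ (x * y) = 0) (h : ∃ z ∈ u ++ v, S z.2) :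
    DD φ u v = 0 := by
  by_cases hl : u.length = v.length
  swap
  · exact DD_len φ u v hl
  induction u generalizing v with
  | nil => cases v with
    | nil => simp at h
    | cons y v => rfl
  | cons x u ih => cases v with
    | nil => rfl
    | cons y v =>
      rw [DD]
      by_cases hxy : S x.2 ∨ S y.2
      · rw [hS _ _ hxy]; simp
      · rw [ih v ?_ (by simpa using hl), mul_zero]
        push Not at hxy
        obtain ⟨z, hz, hzS⟩ := h
        refine ⟨z, ?_, hzS⟩
        simp only [List.cons_append, List.mem_cons, List.mem_append] at hz ⊢
        rcases hz with rfl | hz | rfl | hz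
        · exact absurd hzS hxy.1
        · exact Or.inl hz
        · exact absurd hzS hxy.2
        · exact Or.inr hz

open Classical in
lemma DD_ofFn {ι : Type*} (φ : B → ℂ) (m : ℕ) (p q : Fin m → ι × B) :
    DD φ (List.ofFn p) (List.ofFn q) =
      ∏ k, if (p k).1 = (q k).1 then φ ((p k).2 * (q k).2) else 0 := by
  induction m with
  | zero => simp [DD]
  | succ m ih => rw [List.ofFn_succ, List.ofFn_succ, DD, ih, Fin.prod_univ_succ]

lemma WAlt_ofFn {ι : Type*} (n : ℕ) (g : Fin (n + 1) → ι × B) :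
    WAlt (List.ofFn g) ↔ ∀ k : Fin n, (g k.castSucc).1 ≠ (g k.succ).1 := by
  unfold WAlt
  rw [List.isChain_iff_getElem]
  simp only [List.length_ofFn, List.getElem_ofFn]
  constructor
  · intro h k
    exact h k (by omega)
  · intro h i hi
    exact h ⟨i, by omega⟩

lemma WCent_ofFn {ι : Type*} (φ : B → ℂ) (Alg : ι → Set B) (n : ℕ) (g : Fin n → ι × B) :
    WCent φ Alg (List.ofFn g) ↔ ∀ k, (g k).2 ∈ Alg (g k).1 ∧ φ (g k).2 = 0 := by
  unfold WCent
  simp [List.mem_ofFn]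

lemma wval_ofFn {ι : Type*} (n : ℕ) (g : Fin n → ι × B) :
    wval (List.ofFn g) = (List.ofFn fun k => (g k).2).prod := by
  unfold wval
  rw [List.map_ofFn]; rfl

lemma free_iff {ι : Type*} (φ : B → ℂ) (Alg : ι → Set B) :
    IsFreeFamily φ Alg ↔
      ∀ w : List (ι × B), w ≠ [] → WAlt w → WCent φ Alg w → φ (wval w) = 0 := by
  constructor
  · intro h
    rw [List.forall_iff_forall_tuple]
    intro n g hne halt hc
    cases n with
    | zero => simp at hne
    | succ n =>
      rw [WAlt_ofFn] at halt
      rw [WCent_ofFn] at hc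
      rw [wval_ofFn]
      exact h n (fun k => (g k).1) (fun k => (g k).2) halt (fun k => (hc k).1) (fun k => (hc k).2)
  · intro h n idx a halt hm hc
    have := h (List.ofFn fun k => (idx k, a k)) (by simp)
      ((WAlt_ofFn _ _).2 halt) ((WCent_ofFn _ _ _ _).2 fun k => ⟨hm k, hc k⟩)
    rwa [wval_ofFn] at this

lemma ofFn_mid {α : Type*} (m : ℕ) (g : Fin (2 * m + 1) → α) :
    List.ofFn g = (List.ofFn fun j : Fin m =>
        g (Fin.castLE (by omega) j.rev)).reverse ++
      g ⟨m, by omega⟩ :: List.ofFn fun j : Fin m => g (Fin.castLE (by omega) j.rev).rev := by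
  apply List.ext_getElem
  · simp; omega
  · intro i h1 h2
    simp only [List.length_ofFn] at h1
    simp only [List.getElem_ofFn, List.getElem_append, List.length_reverse, List.length_ofFn,
      List.getElem_reverse, List.getElem_cons]
    split_ifs with h3 h4
    · congr 1; ext; simp [Fin.val_rev]; omega
    · congr 1; ext; simp; omega
    · congr 1; ext; simp [Fin.val_rev]; omega

open Classical in
lemma DD_mid {ι : Type*} (φ : B → ℂ) (m : ℕ) (g : Fin (2 * m + 1) → ι × B)
    (u v : List (ι × B)) (x : ι × B) (hw : List.ofFn g = u.reverse ++ x :: v)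
    (hu : u.length = v.length) :
    x = g ⟨m, by omega⟩ ∧ DD φ u v = ∏ j : Fin m,
      if (g (Fin.castLE (by omega) j)).1 = (g (Fin.castLE (by omega) j : Fin (2 * m + 1)).rev).1
      then φ ((g (Fin.castLE (by omega) j)).2 * (g (Fin.castLE (by omega) j : Fin (2 * m + 1)).rev).2)
      else 0 := by
  have hl := congrArg List.length hw
  simp at hl
  rw [ofFn_mid] at hw
  obtain ⟨h1, h2⟩ := List.append_inj hw (by simp; omega)
  rw [List.cons.injEq] at h2
  obtain ⟨h2, h3⟩ := h2
  refine ⟨h2.symm, ?_⟩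
  rw [← h3, ← List.reverse_injective h1, DD_ofFn]
  exact Equiv.prod_comp Fin.revPerm (fun j : Fin m =>
      if (g (Fin.castLE (by omega) j)).1 = (g (Fin.castLE (by omega) j : Fin (2 * m + 1)).rev).1
      then φ ((g (Fin.castLE (by omega) j)).2 * (g (Fin.castLE (by omega) j : Fin (2 * m + 1)).rev).2)
      else 0)

/-- List version of the infinitesimal conditions. -/
def InfL {ι : Type*} (φ φ' : B → ℂ) (Alg : ι → Set B) : Prop :=
  (∀ w : List (ι × B), w ≠ [] → WAlt w → WCent φ Alg w → Even w.length → φ' (wval w) = 0) ∧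
  (∀ (u v : List (ι × B)) (x : ι × B), u.length = v.length → WAlt (u.reverse ++ x :: v) →
    WCent φ Alg (u.reverse ++ x :: v) →
    φ' (wval (u.reverse ++ x :: v)) = DD φ u v * φ' x.2)

lemma pal_iff {ι : Type*} (m : ℕ) (idx : Fin (2 * m + 1) → ι) :
    (∀ k, idx k = idx k.rev) ↔ ∀ j : Fin m, idx (Fin.castLE (by omega) j) =
      idx (Fin.castLE (by omega) j : Fin (2 * m + 1)).rev := by
  constructor
  · intro h j; exact h _
  · intro h k
    rcases lt_trichotomy k.1 m with hk | hk | hk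
    · exact h ⟨k, hk⟩
    · congr 1; ext; simp [Fin.val_rev]; omega
    · have := h ⟨2 * m - k, by omega⟩
      have e : (Fin.castLE (by omega) (⟨2 * m - k, by omega⟩ : Fin m) : Fin (2 * m + 1)) = k.rev := by
        ext; simp [Fin.val_rev]
      rw [e, Fin.rev_rev] at this
      exact this.symm

lemma infFree_iff {ι : Type*} (φ φ' : B → ℂ) (Alg : ι → Set B) :
    IsInfFree φ φ' Alg ↔ IsFreeFamily φ Alg ∧ InfL φ φ' Alg := by
  classical
  unfold IsInfFree InfL
  refine and_congr_right fun _ => ⟨?_, ?_⟩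
  · rintro ⟨h2, h3⟩
    constructor
    · rw [List.forall_iff_forall_tuple]
      intro n g hne halt hc hev
      cases n with
      | zero => simp at hne
      | succ n =>
        rw [WAlt_ofFn] at halt
        rw [WCent_ofFn] at hc
        rw [wval_ofFn]
        refine h2 n (fun k => (g k).1) (fun k => (g k).2) halt
          (fun k => (hc k).1) (fun k => (hc k).2) ?_
        rintro ⟨he, -⟩
        rw [List.length_ofFn, Nat.even_add_one] at hev
        exact hev he
    · intro u v x hl halt hc
      obtain ⟨m, hm⟩ : ∃ m, m = u.length := ⟨_, rfl⟩
      obtain ⟨g, hg⟩ : ∃ g : Fin (2 * m + 1) → ι × B, List.ofFn g = u.reverse ++ x :: v := by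
        have hlen : (u.reverse ++ x :: v).length = 2 * m + 1 := by simp; omega
        rw [← hlen]
        exact ⟨fun k => (u.reverse ++ x :: v)[k], List.ofFn_getElem⟩
      obtain ⟨rfl, hD⟩ := DD_mid φ m g u v x hg hl
      rw [← hg] at halt hc ⊢
      rw [WAlt_ofFn] at halt
      rw [WCent_ofFn] at hc
      rw [wval_ofFn, hD]
      by_cases hp : ∀ k, (g k).1 = (g k.rev).1
      · rw [h3 m (fun k => (g k).1) (fun k => (g k).2) halt
          (fun k => (hc k).1) (fun k => (hc k).2) hp]
        congr 1
        refine Finset.prod_congr rfl fun j _ => ?_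
        rw [if_pos (hp _)]
      · rw [h2 (2 * m) (fun k => (g k).1) (fun k => (g k).2) halt
          (fun k => (hc k).1) (fun k => (hc k).2) (fun h => hp h.2)]
        have := (pal_iff m (fun k => (g k).1)).not.1 hp
        push Not at this
        obtain ⟨j, hj⟩ := this
        rw [Finset.prod_eq_zero (Finset.mem_univ j), zero_mul]
        rw [if_neg hj]
  · rintro ⟨h2, h3⟩
    have key : ∀ (m : ℕ) (idx : Fin (2 * m + 1) → ι) (b : Fin (2 * m + 1) → B),
      (∀ k : Fin (2 * m), idx k.castSucc ≠ idx k.succ) →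
      (∀ k, b k ∈ Alg (idx k)) → (∀ k, φ (b k) = 0) →
      φ' (List.ofFn b).prod = (∏ j : Fin m,
        if idx (Fin.castLE (by omega) j) = idx (Fin.castLE (by omega) j : Fin (2 * m + 1)).rev
        then φ (b (Fin.castLE (by omega) j) * b (Fin.castLE (by omega) j).rev) else 0) *
        φ' (b ⟨m, by omega⟩) := by
      intro m idx b halt hm hc
      set g : Fin (2 * m + 1) → ι × B := fun k => (idx k, b k) with hgdef
      have hg := ofFn_mid m g
      obtain ⟨hx, hD⟩ := DD_mid φ m g _ _ _ hg (by simp)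
      have := h3 _ _ _ (by simp) (hg ▸ (WAlt_ofFn _ g).2 halt)
        (hg ▸ (WCent_ofFn _ _ _ g).2 fun k => ⟨hm k, hc k⟩)
      rw [← hg, wval_ofFn, hD] at this
      exact this
    constructor
    · intro n idx b halt hm hc hn
      by_cases he : Even n
      · obtain ⟨m, hm2⟩ := he
        obtain rfl : n = 2 * m := by omega
        rw [key m idx b halt hm hc]
        have hp : ¬ ∀ k, idx k = idx k.rev := fun h => hn ⟨by simp, h⟩
        rw [pal_iff] at hp
        push Not at hp
        obtain ⟨j, hj⟩ := hp
        rw [Finset.prod_eq_zero (Finset.mem_univ j), zero_mul]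
        rw [if_neg hj]
      · have := h2 (List.ofFn fun k => (idx k, b k)) (by simp)
          ((WAlt_ofFn _ _).2 halt) ((WCent_ofFn _ _ _ _).2 fun k => ⟨hm k, hc k⟩)
          (by rw [List.length_ofFn, Nat.even_add_one]; exact he)
        rwa [wval_ofFn] at this
    · intro m idx b halt hm hc hp
      rw [key m idx b halt hm hc]
      congr 1
      refine Finset.prod_congr rfl fun j _ => ?_
      rw [if_pos (hp _)]

lemma WAlt_reverse {ι : Type*} (w : List (ι × B)) : WAlt w.reverse ↔ WAlt w := by
  unfold WAlt
  rw [List.isChain_reverse]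
  simp only [ne_comm]

lemma WAlt_relabel {ι : Type*} {x z : ι × B} {u : List (ι × B)} (h : WAlt (x :: u))
    (hz : z.1 = x.1) : WAlt (z :: u) := by
  unfold WAlt at *
  rw [List.isChain_cons] at *
  rwa [hz]

lemma WAlt_tail {ι : Type*} {x : ι × B} {u : List (ι × B)} (h : WAlt (x :: u)) : WAlt u := by
  unfold WAlt at *
  rw [List.isChain_cons] at h
  exact h.2

lemma WAlt_split {ι : Type*} {x : ι × B} {u v : List (ι × B)} :
    WAlt (u ++ x :: v) ↔ WAlt (u ++ [x]) ∧ WAlt (x :: v) := List.isChain_split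

lemma WAlt_left {ι : Type*} {u v : List (ι × B)} (h : WAlt (u ++ v)) : WAlt u :=
  (List.isChain_append.1 h).1

lemma WAlt_right {ι : Type*} {u v : List (ι × B)} (h : WAlt (u ++ v)) : WAlt v :=
  (List.isChain_append.1 h).2.1

lemma WCent_append {ι : Type*} {φ : B → ℂ} {Alg : ι → Set B} {u v : List (ι × B)} :
    WCent φ Alg (u ++ v) ↔ WCent φ Alg u ∧ WCent φ Alg v := by
  unfold WCent
  simp only [List.mem_append, or_imp, forall_and]
  tauto

lemma WCent_cons {ι : Type*} {φ : B → ℂ} {Alg : ι → Set B} {x : ι × B} {v : List (ι × B)} :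
    WCent φ Alg (x :: v) ↔ (x.2 ∈ Alg x.1 ∧ φ x.2 = 0) ∧ WCent φ Alg v := by
  unfold WCent
  simp only [List.mem_cons, forall_eq_or_imp]

lemma WCent_nil {ι : Type*} {φ : B → ℂ} {Alg : ι → Set B} :
    WCent φ Alg ([] : List (ι × B)) := by
  intro x hx; simp at hx

lemma WCent_reverse {ι : Type*} {φ : B → ℂ} {Alg : ι → Set B} {v : List (ι × B)} :
    WCent φ Alg v.reverse ↔ WCent φ Alg v := by
  unfold WCent
  simp only [List.mem_reverse]

lemma free_pair {ι : Type*} (φ : B →ₗ[ℂ] ℂ) (hφ1 : φ 1 = 1) (Alg : ι → Set B)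
    (hmul : ∀ i, ∀ x ∈ Alg i, ∀ y ∈ Alg i, x * y - φ (x * y) • (1 : B) ∈ Alg i)
    (hfree : IsFreeFamily φ Alg) (u v : List (ι × B)) (hu : WAlt u) (hv : WAlt v)
    (hcu : WCent φ Alg u) (hcv : WCent φ Alg v) :
    φ (wval u.reverse * wval v) = DD φ u v := by
  rw [free_iff] at hfree
  induction u generalizing v with
  | nil => cases v with
    | nil => simp [DD, hφ1]
    | cons y v => simpa [DD] using hfree (y :: v) (by simp) hv hcv
  | cons x u ih => cases v with
    | nil =>
      have := hfree (x :: u).reverse (by simp) ((WAlt_reverse _).2 hu) (WCent_reverse.2 hcu)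
      simpa [DD] using this
    | cons y v =>
      rw [WCent_cons] at hcu hcv
      have hur : WAlt (u.reverse ++ [x]) := by
        rw [← List.reverse_cons]; exact (WAlt_reverse _).2 hu
      rw [DD]
      split_ifs with hxy
      · obtain ⟨i, x⟩ := x
        obtain ⟨j, y⟩ := y
        simp only at hxy
        subst hxy
        simp only at hcu hcv ⊢
        have h1 := hfree (u.reverse ++ (i, x * y - φ (x * y) • (1 : B)) :: v) (by simp)
          (WAlt_split.2 ⟨by
            rw [← List.reverse_cons]
            exact (WAlt_reverse _).2 (WAlt_relabel hu rfl), WAlt_relabel hv rfl⟩)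
          (WCent_append.2 ⟨WCent_reverse.2 hcu.2, WCent_cons.2
            ⟨⟨hmul i x hcu.1.1 y hcv.1.1, by simp [hφ1]⟩, hcv.2⟩⟩)
        have h2 := ih v (WAlt_tail hu) (WAlt_tail hv) hcu.2 hcv.2
        rw [← h2]
        simp only [wval_append, wval_cons, wval_nil, sub_mul, mul_sub, map_sub, smul_mul_assoc,
          one_mul, mul_smul_comm, map_smul, smul_eq_mul, List.reverse_cons, mul_one] at h1 ⊢
        rw [sub_eq_zero] at h1
        rw [← h1]
        simp only [mul_assoc]
      · have := hfree ((x :: u).reverse ++ y :: v) (by simp) (by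
          unfold WAlt
          rw [List.reverse_cons, List.append_assoc]
          exact List.isChain_append_cons_cons.2 ⟨hur, hxy, hv⟩)
          (WCent_append.2 ⟨WCent_reverse.2 (WCent_cons.2 hcu), WCent_cons.2 hcv⟩)
        rw [wval_append] at this
        rw [this, zero_mul]

/-- number of letters labelled `none` -/
def cnt {ι : Type*} (w : List (Option ι × B)) : ℕ := w.countP (fun x => x.1.isNone)

@[simp] lemma cnt_nil {ι : Type*} : cnt ([] : List (Option ι × B)) = 0 := rfl
@[simp] lemma cnt_append {ι : Type*} (u v : List (Option ι × B)) :
    cnt (u ++ v) = cnt u + cnt v := by simp [cnt]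
@[simp] lemma cnt_none {ι : Type*} (f : B) (v : List (Option ι × B)) :
    cnt ((none, f) :: v) = cnt v + 1 := by simp [cnt]
@[simp] lemma cnt_some {ι : Type*} (i : ι) (f : B) (v : List (Option ι × B)) :
    cnt ((some i, f) :: v) = cnt v := by simp [cnt]
@[simp] lemma cnt_reverse {ι : Type*} (v : List (Option ι × B)) :
    cnt v.reverse = cnt v := by simp [cnt]

lemma cnt_split {ι : Type*} (w : List (Option ι × B)) (h : cnt w ≠ 0) :
    ∃ l0 f l1, w = l0 ++ (none, f) :: l1 ∧ cnt l0 = 0 := by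
  induction w with
  | nil => simp at h
  | cons x w ih =>
    rcases x with ⟨_ | i, x⟩
    · exact ⟨[], x, w, rfl, rfl⟩
    · obtain ⟨l0, f, l1, rfl, h0⟩ := ih (by simpa using h)
      exact ⟨(some i, x) :: l0, f, l1, rfl, by simpa using h0⟩

lemma cnt_unique {ι : Type*} (l0 u l1 v : List (Option ι × B)) (f g : B)
    (h : u ++ (none, g) :: v = l0 ++ (none, f) :: l1) (h0 : cnt l0 = 0) (hu : cnt u = 0) :
    u = l0 ∧ g = f ∧ v = l1 := by
  induction l0 generalizing u with
  | nil => cases u with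
    | nil => simpa using h
    | cons y u =>
      simp only [List.cons_append, List.nil_append, List.cons.injEq] at h
      obtain ⟨rfl, h⟩ := h
      simp at hu
  | cons x l0 ih => cases u with
    | nil =>
      simp only [List.cons_append, List.nil_append, List.cons.injEq] at h
      obtain ⟨rfl, h⟩ := h
      simp at h0
    | cons y u =>
      simp only [List.cons_append, List.cons.injEq] at h
      obtain ⟨rfl, h⟩ := h
      rcases y with ⟨_ | i, y⟩
      · simp at hu
      · have := ih u h (by simpa using h0) (by simpa using hu)
        simp [this]

lemma cnt_exists {ι : Type*} (w : List (Option ι × B)) (h : cnt w ≠ 0) :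
    ∃ f, (none, f) ∈ w := by
  obtain ⟨l0, f, l1, rfl, -⟩ := cnt_split w h
  exact ⟨f, by simp⟩

lemma odd_split {α : Type*} (w : List α) (h : ¬ Even w.length) :
    ∃ (u : List α) (x : α) (v : List α), w = u.reverse ++ x :: v ∧ u.length = v.length := by
  rw [Nat.not_even_iff_odd] at h
  obtain ⟨m, hm⟩ := h
  have hlt : m < w.length := by omega
  refine ⟨(w.take m).reverse, w[m], w.drop (m + 1), ?_, ?_⟩
  · rw [List.reverse_reverse, List.getElem_cons_drop, List.take_append_drop]
  · simp; omega

/-- words with two letters labelled `none` vanish -/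
def ZZ {ι : Type*} (φ φ' : B → ℂ) (Alg : Option ι → Set B) : Prop :=
  ∀ w, WAlt w → WCent φ Alg w → 2 ≤ cnt w → φ' (wval w) = 0

/-- words with a single letter labelled `none` factor -/
def OO {ι : Type*} (φ φ' : B → ℂ) (Alg : Option ι → Set B) : Prop :=
  ∀ l0 f l1, WAlt (l0 ++ (none, f) :: l1) → WCent φ Alg (l0 ++ (none, f) :: l1) →
    cnt l0 = 0 → cnt l1 = 0 →
    φ' (wval (l0 ++ (none, f) :: l1)) = φ (wval l0 * wval l1) * φ' f

lemma wval_mem_A {ι : Type*} (φ : B → ℂ) (Alg : Option ι → Set B) (A : Subalgebra ℂ B)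
    (hA : ∀ i, ∀ x ∈ Alg (some i), x ∈ A) (w : List (Option ι × B)) (hc : WCent φ Alg w)
    (h0 : cnt w = 0) : wval w ∈ A := by
  induction w with
  | nil => simp
  | cons x w ih =>
    rcases x with ⟨_ | i, x⟩
    · simp at h0
    · rw [WCent_cons] at hc
      rw [wval_cons]
      exact A.mul_mem (hA i x hc.1.1) (ih hc.2 (by simpa using h0))

lemma infL_iff {ι : Type*} (A : Subalgebra ℂ B) (F : Submodule ℂ B)
    (hFmulL : ∀ b : B, ∀ f ∈ F, b * f ∈ F)
    (hFmulR : ∀ b : B, ∀ f ∈ F, f * b ∈ F)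
    (φ φ' : B →ₗ[ℂ] ℂ) (hφ1 : φ 1 = 1) (hφF : ∀ f ∈ F, φ f = 0) (hφ'A : ∀ a ∈ A, φ' a = 0)
    (Alg : Option ι → Set B)
    (hmul : ∀ i, ∀ x ∈ Alg i, ∀ y ∈ Alg i, x * y - φ (x * y) • (1 : B) ∈ Alg i)
    (hA : ∀ i, ∀ x ∈ Alg (some i), x ∈ A)
    (hF : ∀ x ∈ Alg none, φ x = 0 → x ∈ F)
    (hfree : IsFreeFamily φ Alg) :
    InfL φ φ' Alg ↔ ZZ φ φ' Alg ∧ OO φ φ' Alg := by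
  have E2 : ∀ (u v : List (Option ι × B)) x, WCent φ Alg (u.reverse ++ x :: v) →
      2 ≤ cnt (u.reverse ++ x :: v) → DD φ u v * φ' x.2 = 0 := by
    intro u v x hc h2
    rw [WCent_append, WCent_reverse, WCent_cons] at hc
    rcases x with ⟨_ | i, x⟩
    · rw [DD_zero φ u v (· ∈ F), zero_mul]
      · rintro x y (h | h)
        · exact hφF _ (hFmulR _ _ h)
        · exact hφF _ (hFmulL _ _ h)
      · have : cnt (u ++ v) ≠ 0 := by simp at h2 ⊢; omega
        obtain ⟨f, hf⟩ := cnt_exists _ this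
        have h3 := (WCent_append.2 ⟨hc.1, hc.2.2⟩) _ hf
        exact ⟨_, hf, hF _ h3.1 h3.2⟩
    · rw [hφ'A x (hA i x hc.2.1.1), mul_zero]
  have E0 : ∀ (l0 : List (Option ι × B)) f l1, WAlt (l0 ++ (none, f) :: l1) →
      WCent φ Alg (l0 ++ (none, f) :: l1) →
      φ (wval l0 * wval l1) = DD φ l0.reverse l1 := by
    intro l0 f l1 ha hc
    rw [WCent_append, WCent_cons] at hc
    have := free_pair φ hφ1 Alg hmul hfree l0.reverse l1 ((WAlt_reverse _).2 (WAlt_left ha))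
      (WAlt_tail (WAlt_right ha)) (WCent_reverse.2 hc.1) hc.2.2
    rwa [List.reverse_reverse] at this
  have E1 : ∀ (u v : List (Option ι × B)) x l0 f l1, u.length = v.length →
      u.reverse ++ x :: v = l0 ++ (none, f) :: l1 → WAlt (l0 ++ (none, f) :: l1) →
      WCent φ Alg (l0 ++ (none, f) :: l1) → cnt l0 = 0 → cnt l1 = 0 →
      DD φ u v * φ' x.2 = φ (wval l0 * wval l1) * φ' f := by
    intro u v x l0 f l1 hl he ha hc h0 h1
    rw [E0 l0 f l1 ha hc]
    rcases x with ⟨_ | i, x⟩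
    · have hcn := congrArg cnt he
      simp [h0, h1] at hcn
      obtain ⟨rfl, rfl, rfl⟩ := cnt_unique _ _ _ _ _ _ he h0 (by simp; omega)
      simp
    · rw [← he, WCent_append, WCent_cons] at hc
      rw [hφ'A x (hA i x hc.2.1.1), mul_zero, DD_len, zero_mul]
      intro hl2
      have hlen := congrArg List.length he
      simp at hlen hl2
      have := (List.append_inj he (by simp; omega)).2
      simp at this
  constructor
  · rintro ⟨h1, h2⟩
    constructor
    · intro w ha hc hn
      by_cases hev : Even w.length
      · exact h1 w (by rintro rfl; simp at hn) ha hc hev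
      · obtain ⟨u, x, v, rfl, hl⟩ := odd_split w hev
        rw [h2 u v x hl ha hc, E2 u v x hc hn]
    · intro l0 f l1 ha hc h0 h1'
      by_cases hev : Even (l0 ++ (none, f) :: l1).length
      · rw [h1 _ (by simp) ha hc hev, E0 l0 f l1 ha hc, DD_len, zero_mul]
        intro hl
        simp at hl
        simp [hl] at hev
        rw [← add_assoc, Nat.even_add_one] at hev
        exact hev (by simp)
      · obtain ⟨u, x, v, he, hl⟩ := odd_split _ hev
        rw [← E1 u v x l0 f l1 hl he.symm ha hc h0 h1', he]
        exact h2 u v x hl (he ▸ ha) (he ▸ hc)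
  · rintro ⟨hz, ho⟩
    constructor
    · intro w hne ha hc hev
      by_cases h2 : 2 ≤ cnt w
      · exact hz w ha hc h2
      by_cases h0 : cnt w = 0
      · exact hφ'A _ (wval_mem_A φ Alg A hA w hc h0)
      obtain ⟨l0, f, l1, rfl, hl0⟩ := cnt_split w h0
      simp [hl0] at h2
      rw [ho l0 f l1 ha hc hl0 (by omega), E0 l0 f l1 ha hc, DD_len, zero_mul]
      intro hl
      simp at hl
      simp [hl] at hev
      rw [← add_assoc, Nat.even_add_one] at hev
      exact hev (by simp)
    · intro u v x hl ha hc
      by_cases h2 : 2 ≤ cnt (u.reverse ++ x :: v)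
      · rw [hz _ ha hc h2, E2 u v x hc h2]
      by_cases h0 : cnt (u.reverse ++ x :: v) = 0
      · rw [hφ'A _ (wval_mem_A φ Alg A hA _ hc h0)]
        rw [WCent_append, WCent_cons] at hc
        rcases x with ⟨_ | i, x⟩
        · simp at h0
        · rw [hφ'A x (hA i x hc.2.1.1), mul_zero]
      obtain ⟨l0, f, l1, he, hl0⟩ := cnt_split _ h0
      rw [he] at h2
      simp [hl0] at h2
      rw [E1 u v x l0 f l1 hl he (he ▸ ha) (he ▸ hc) hl0 (by omega), he,
        ho l0 f l1 (he ▸ ha) (he ▸ hc) hl0 (by omega)]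

lemma mem_span_words {ι : Type*} (φ : B →ₗ[ℂ] ℂ) (hφ1 : φ 1 = 1) (Alg : ι → Set B)
    (hmul : ∀ i, ∀ x ∈ Alg i, ∀ y ∈ Alg i, x * y - φ (x * y) • (1 : B) ∈ Alg i)
    (hsub : ∀ i, ∀ x ∈ Alg i, x - φ x • (1 : B) ∈ Alg i)
    (t : B) (ht : t ∈ Algebra.adjoin ℂ (⋃ i, Alg i)) :
    t ∈ Submodule.span ℂ {y | ∃ w : List (ι × B), WAlt w ∧ WCent φ Alg w ∧ y = wval w} := by
  set T := Submodule.span ℂ {y | ∃ w : List (ι × B), WAlt w ∧ WCent φ Alg w ∧ y = wval w}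
    with hT
  have hw : ∀ w : List (ι × B), WAlt w → WCent φ Alg w → wval w ∈ T :=
    fun w h1 h2 => Submodule.subset_span ⟨w, h1, h2, rfl⟩
  have hl : ∀ i, ∀ x ∈ Alg i, ∀ s ∈ T, x * s ∈ T := by
    intro i x hx s hs
    induction hs using Submodule.span_induction with
    | zero => simp
    | add a b _ _ ha hb => rw [mul_add]; exact T.add_mem ha hb
    | smul c a _ ha => rw [mul_smul_comm]; exact T.smul_mem c ha
    | mem y hy =>
      obtain ⟨w, ha, hc, rfl⟩ := hy
      by_cases hcase : ∃ z w', w = (i, z) :: w'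
      · obtain ⟨z, w', rfl⟩ := hcase
        rw [WCent_cons] at hc
        have h1 := hw ((i, x * z - φ (x * z) • (1 : B)) :: w') (WAlt_relabel ha rfl)
          (WCent_cons.2 ⟨⟨hmul i x hx z hc.1.1, by simp [hφ1]⟩, hc.2⟩)
        have h2 := T.add_mem h1 (T.smul_mem (φ (x * z)) (hw w' (WAlt_tail ha) hc.2))
        simpa [sub_mul, mul_assoc] using h2
      · have h1 := hw ((i, x - φ x • (1 : B)) :: w) (by
            unfold WAlt
            rw [List.isChain_cons]
            refine ⟨?_, ha⟩
            intro y hy heq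
            cases w with
            | nil => simp at hy
            | cons z w' =>
              simp at hy
              subst hy
              simp only at heq
              subst heq
              exact hcase ⟨_, _, rfl⟩)
          (WCent_cons.2 ⟨⟨hsub i x hx, by simp [hφ1]⟩, hc⟩)
        have h2 := T.add_mem h1 (T.smul_mem (φ x) (hw w ha hc))
        simpa [sub_mul, mul_assoc] using h2
  have h1T : (1 : B) ∈ T := by
    simpa using hw [] List.isChain_nil WCent_nil
  have ht' : t ∈ Subalgebra.toSubmodule (Algebra.adjoin ℂ (⋃ i, Alg i)) := ht
  rw [Algebra.adjoin_eq_span] at ht'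
  refine (Submodule.span_le.2 ?_) ht'
  intro y hy
  induction hy using Submonoid.closure_induction_left with
  | one => exact h1T
  | mul_left x hx y hy ih =>
    obtain ⟨i, hi⟩ := Set.mem_iUnion.1 hx
    exact hl i x hi y ih

lemma prod_Ioo_fin (k : ℕ) (g : Fin (k + 2) → ℂ) :
    ∏ j ∈ Finset.Ioo (0 : Fin (k + 2)) (Fin.last (k + 1)), g j =
      ∏ j : Fin k, g j.succ.castSucc := by
  symm
  refine Finset.prod_bij (fun j _ => j.succ.castSucc) ?_ ?_ ?_ ?_
  · intro j _
    simp [Fin.lt_def]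
  · intro a _ b _ h
    simpa using h
  · intro b hb
    simp only [Finset.mem_Ioo, Fin.lt_def, Fin.val_last, Fin.val_zero] at hb
    refine ⟨⟨b - 1, by omega⟩, Finset.mem_univ _, ?_⟩
    ext; simp; omega
  · intro a _; rfl

lemma cam_one {φ Φ : B → ℂ} {A₁ F₁ : Set B} (h : CyclicAntimonotone φ Φ A₁ F₁)
    (a0 f a1 : B) (h0 : a0 ∈ A₁) (hf : f ∈ F₁) (h1 : a1 ∈ A₁) :
    Φ (a0 * (f * a1)) = φ (a0 * a1) * Φ f := by
  have := h 1 one_pos ![a0, a1] ![f]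
    (by intro k; fin_cases k <;> simpa) (by intro k; fin_cases k; simpa)
  rw [prod_Ioo_fin] at this
  simpa [altWord] using this

lemma cam_zero {φ Φ : B → ℂ} {A₁ F₁ : Set B} (h : CyclicAntimonotone φ Φ A₁ F₁)
    (a0 f1 a1 f2 a2 : B) (L : List (B × B))
    (h0 : a0 ∈ A₁) (hf1 : f1 ∈ F₁) (h1 : a1 ∈ A₁) (hf2 : f2 ∈ F₁) (h2 : a2 ∈ A₁)
    (hL : ∀ p ∈ L, p.1 ∈ F₁ ∧ p.2 ∈ A₁) (hz : φ a1 = 0) :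
    Φ (a0 * (f1 * a1 * (f2 * a2 * (L.map fun p => p.1 * p.2).prod))) = 0 := by
  have := h (L.length + 2) (by omega)
    (Fin.cons a0 (Fin.cons a1 (Fin.cons a2 (fun k : Fin L.length => L[k].2))))
    (Fin.cons f1 (Fin.cons f2 (fun k : Fin L.length => L[k].1)))
    (by
      intro k
      refine Fin.cases h0 (fun k => ?_) k
      refine Fin.cases h1 (fun k => ?_) k
      refine Fin.cases h2 (fun k => ?_) k
      exact (hL _ (List.getElem_mem _)).2)
    (by
      intro k
      refine Fin.cases hf1 (fun k => ?_) k
      refine Fin.cases hf2 (fun k => ?_) k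
      exact (hL _ (List.getElem_mem _)).1)
  rw [prod_Ioo_fin, Fin.prod_univ_succ] at this
  have e : (Fin.succ (0 : Fin (L.length + 1))).castSucc = Fin.succ 0 := rfl
  rw [e, Fin.cons_succ, Fin.cons_zero, Fin.cons_zero, hz] at this
  simp only [zero_mul, mul_zero] at this
  rw [← this]
  congr 1
  simp only [altWord, Fin.cons_zero, Fin.cons_succ, List.ofFn_succ, List.prod_cons]
  congr 4
  exact (List.ofFn_getElem_eq_map L (fun p => p.1 * p.2)).symm

lemma cam_of {φ Φ : B → ℂ} (A₁ : Subalgebra ℂ B) (F₁ : NonUnitalSubalgebra ℂ B)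
    (T : Subalgebra ℂ B) (hAT : ∀ a ∈ A₁, a ∈ T) (hFT : ∀ a ∈ F₁, a ∈ T)
    (h1 : ∀ a0 ∈ A₁, ∀ f ∈ F₁, ∀ a1 ∈ A₁, Φ (a0 * (f * a1)) = φ (a0 * a1) * Φ f)
    (h2 : ∀ a0 ∈ A₁, ∀ f1 ∈ F₁, ∀ a1 ∈ A₁, ∀ f2 ∈ F₁, ∀ t ∈ T,
      Φ (a0 * (f1 * (a1 * (f2 * t)))) = φ a1 * Φ (a0 * (f1 * (f2 * t)))) :
    CyclicAntimonotone φ Φ (A₁ : Set B) (F₁ : Set B) := by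
  intro n hn
  obtain ⟨k, rfl⟩ : ∃ k, n = k + 1 := ⟨n - 1, by omega⟩
  clear hn
  induction k with
  | zero =>
    intro a f ha hf
    rw [prod_Ioo_fin]
    have := h1 (a 0) (ha 0) (f 0) (hf 0) (a 1) (ha 1)
    simpa [altWord] using this
  | succ k ih =>
    intro a f ha hf
    have := ih (Fin.cons (a 0) (fun j : Fin (k + 1) => a j.succ.succ))
      (Fin.cons (f 0 * f 1) (fun j : Fin k => f j.succ.succ))
      (by
        intro j
        refine Fin.cases (ha 0) (fun j => ?_) j
        exact ha _)
      (by
        intro j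
        refine Fin.cases (F₁.mul_mem (hf 0) (hf 1)) (fun j => ?_) j
        exact hf _)
    rw [prod_Ioo_fin] at this ⊢
    rw [Fin.prod_univ_succ]
    have hrest : a (Fin.succ (Fin.succ 0)) *
        (List.ofFn fun j : Fin k => f j.succ.succ * a j.succ.succ.succ).prod ∈ T := by
      refine T.mul_mem (hAT _ (ha _)) (list_prod_mem ?_)
      intro x hx
      rw [List.mem_ofFn] at hx
      obtain ⟨j, rfl⟩ := hx
      exact T.mul_mem (hFT _ (hf _)) (hAT _ (ha _))
    have e := h2 (a 0) (ha 0) (f 0) (hf 0) (a 1) (ha 1) (f 1) (hf 1) _ hrest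
    have l1 : (Fin.last (k + 1)) = Fin.succ (Fin.last k) := rfl
    have l2 : (Fin.last (k + 1 + 1)) = Fin.succ (Fin.succ (Fin.last k)) := rfl
    have hs : ∀ j : Fin k, (Fin.succ j).castSucc = Fin.succ (Fin.castSucc j) := fun _ => rfl
    simp only [altWord, Fin.cons_zero, Fin.cons_succ, List.ofFn_succ, List.prod_cons, l1, hs,
      mul_assoc] at this e ⊢
    rw [l2]
    have e1 : (Fin.succ (0 : Fin (k + 1 + 1))) = 1 := rfl
    have e2 : (Fin.succ (0 : Fin (k + 1))) = 1 := rfl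
    have e3 : (Fin.castSucc (1 : Fin (k + 1 + 1))) = 1 := rfl
    simp only [e1, e2, Fin.succ_castSucc] at this e ⊢
    rw [e, this, e3]
    ring

theorem statement4
    {B : Type*} [Ring B] [Algebra ℂ B]
    (A : Subalgebra ℂ B) (F : Submodule ℂ B)
    (hFmulL : ∀ b : B, ∀ f ∈ F, b * f ∈ F)
    (hFmulR : ∀ b : B, ∀ f ∈ F, f * b ∈ F)
    (hAF : ∀ x ∈ A, x ∈ F → x = 0)
    (hdec : ∀ x : B, ∃ a ∈ A, ∃ f ∈ F, x = a + f)
    (φ Φ φ' : B →ₗ[ℂ] ℂ)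
    (hφ1 : φ 1 = 1) (hφF : ∀ f ∈ F, φ f = 0)
    (hφ'A : ∀ a ∈ A, φ' a = 0) (hφ'F : ∀ f ∈ F, φ' f = Φ f)
    {ι κ : Type*}
    (Ai : ι → Subalgebra ℂ B) (hAi : ∀ i, Ai i ≤ A)
    (Fj : κ → NonUnitalSubalgebra ℂ B) (hFj : ∀ j, ∀ f ∈ Fj j, f ∈ F) :
    (IsFreeFamily ⇑φ (fun i => (Ai i : Set B)) ∧
      CyclicAntimonotone ⇑φ ⇑Φ
        (Algebra.adjoin ℂ (⋃ i, (Ai i : Set B)) : Set B)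
        (NonUnitalAlgebra.adjoin ℂ (⋃ j, (Fj j : Set B)) : Set B)) ↔
    IsInfFree ⇑φ ⇑φ'
      (fun o : Option ι =>
        o.elim
          (unitize (NonUnitalAlgebra.adjoin ℂ (⋃ j, (Fj j : Set B)) : Set B))
          (fun i => (Ai i : Set B))) := by
  classical
  set F₁ := NonUnitalAlgebra.adjoin ℂ (⋃ j, (Fj j : Set B)) with hF₁
  set A₁ := Algebra.adjoin ℂ (⋃ i, (Ai i : Set B)) with hA₁
  set Alg : Option ι → Set B := fun o => o.elim (unitize (F₁ : Set B)) (fun i => (Ai i : Set B))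
    with hAlg
  have hF1F : ∀ f ∈ F₁, f ∈ F := by
    intro f hf
    induction hf using NonUnitalAlgebra.adjoin_induction with
    | mem x hx =>
      obtain ⟨j, hj⟩ := Set.mem_iUnion.1 hx
      exact hFj j x hj
    | add x y _ _ hx hy => exact F.add_mem hx hy
    | zero => exact F.zero_mem
    | mul x y _ _ hx hy => exact hFmulL x y hy
    | smul c x _ hx => exact F.smul_mem c hx
  have hA1A : ∀ a ∈ A₁, a ∈ A := by
    intro a ha
    exact (Algebra.adjoin_le (Set.iUnion_subset fun i => hAi i)) ha
  have hAiA1 : ∀ i, ∀ a ∈ Ai i, a ∈ A₁ := fun i a ha =>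
    Algebra.subset_adjoin (Set.mem_iUnion.2 ⟨i, ha⟩)
  have hnone1 : ∀ x ∈ Alg none, φ x = 0 → x ∈ F₁ := by
    rintro x ⟨c, f, hf, rfl⟩ h0
    rw [map_add, hφF f (hF1F f hf), Algebra.algebraMap_eq_smul_one, map_smul, hφ1] at h0
    simp at h0
    subst h0
    simpa using hf
  have hF1none : ∀ f ∈ F₁, f ∈ Alg none := fun f hf => ⟨0, f, hf, by simp⟩
  have hF1φ : ∀ f ∈ F₁, φ f = 0 := fun f hf => hφF f (hF1F f hf)
  have hsub' : ∀ o, ∀ x ∈ Alg o, ∀ c : ℂ, x - c • (1 : B) ∈ Alg o := by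
    intro o
    cases o with
    | none =>
      rintro x ⟨c, f, hf, rfl⟩ d
      refine ⟨c - d, f, hf, ?_⟩
      rw [map_sub, ← Algebra.algebraMap_eq_smul_one]
      abel
    | some i =>
      intro x hx c
      exact (Ai i).sub_mem hx ((Ai i).smul_mem (Ai i).one_mem c)
  have hmul' : ∀ o, ∀ x ∈ Alg o, ∀ y ∈ Alg o, x * y ∈ Alg o := by
    intro o
    cases o with
    | none =>
      rintro x ⟨c, f, hf, rfl⟩ y ⟨d, g, hg, rfl⟩
      refine ⟨c * d, c • g + d • f + f * g, F₁.add_mem (F₁.add_mem (SMulMemClass.smul_mem c hg)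
        (SMulMemClass.smul_mem d hf)) (F₁.mul_mem hf hg), ?_⟩
      simp only [Algebra.algebraMap_eq_smul_one, add_mul, mul_add, smul_mul_assoc, mul_smul_comm,
        one_mul, mul_one]
      module
    | some i =>
      intro x hx y hy
      exact (Ai i).mul_mem hx hy
  have hmul : ∀ o, ∀ x ∈ Alg o, ∀ y ∈ Alg o, x * y - φ (x * y) • (1 : B) ∈ Alg o :=
    fun o x hx y hy => hsub' o _ (hmul' o x hx y hy) _
  have hA : ∀ i, ∀ x ∈ Alg (some i), x ∈ A := fun i x hx => hAi i hx
  have hFn : ∀ x ∈ Alg none, φ x = 0 → x ∈ F := fun x hx h0 => hF1F x (hnone1 x hx h0)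
  have hvalA : ∀ w, WCent φ Alg w → cnt w = 0 → wval w ∈ A₁ := fun w hc h0 =>
    wval_mem_A φ Alg A₁ (fun i x hx => hAiA1 i x hx) w hc h0
  -- transport of words
  let up : List (ι × B) → List (Option ι × B) := fun w => w.map fun p => (some p.1, p.2)
  have up_val : ∀ w, wval (up w) = wval w := by
    intro w; simp [wval, up, Function.comp_def]
  have up_alt : ∀ w, WAlt (up w) ↔ WAlt w := by
    intro w
    simp [WAlt, up, List.isChain_map]
  have up_cent : ∀ w, WCent φ Alg (up w) ↔ WCent φ (fun i => (Ai i : Set B)) w := by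
    intro w
    simp only [WCent, up, List.forall_mem_map]
    rfl
  have up_cnt : ∀ w, cnt (up w) = 0 := by
    intro w
    simp [cnt, up]
  have up_surj : ∀ w, cnt w = 0 → ∃ v, w = up v := by
    intro w hw
    induction w with
    | nil => exact ⟨[], rfl⟩
    | cons x w ih =>
      rcases x with ⟨_ | i, x⟩
      · simp at hw
      · obtain ⟨v, rfl⟩ := ih (by simpa using hw)
        exact ⟨(i, x) :: v, rfl⟩
  rw [infFree_iff]
  constructor
  · rintro ⟨hfr, hcam⟩
    have hfree : IsFreeFamily φ Alg := by
      rw [free_iff] at hfr ⊢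
      intro w hne ha hc
      by_cases h0 : cnt w = 0
      · obtain ⟨v, rfl⟩ := up_surj w h0
        rw [up_val]
        exact hfr v (by rintro rfl; exact hne rfl) ((up_alt v).1 ha) ((up_cent v).1 hc)
      · obtain ⟨l0, f, l1, rfl, -⟩ := cnt_split w h0
        rw [WCent_append, WCent_cons] at hc
        rw [wval_append, wval_cons]
        exact hφF _ (hFmulL _ _ (hFmulR _ _ (hFn f hc.2.1.1 hc.2.1.2)))
    refine ⟨hfree, ?_⟩
    rw [infL_iff A F hFmulL hFmulR φ φ' hφ1 hφF hφ'A Alg hmul hA hFn hfree]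
    constructor
    · intro w ha hc h2
      obtain ⟨l0, f1, l1, rfl, h0⟩ := cnt_split w (by omega)
      simp [h0] at h2
      obtain ⟨l1, f2, l2, rfl, h1⟩ := cnt_split l1 (by omega)
      rw [WCent_append, WCent_cons, WCent_append, WCent_cons] at hc
      obtain ⟨hc0, hf1, hc1, hf2, hc2⟩ := hc
      have hf1' := hnone1 f1 hf1.1 hf1.2
      have hf2' := hnone1 f2 hf2.1 hf2.2
      have ha1 := WAlt_right ha
      have hl1 : l1 ≠ [] := by
        rintro rfl
        unfold WAlt at ha1
        simp at ha1
      have hz : φ (wval l1) = 0 :=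
        (free_iff _ _).1 hfree l1 hl1 (WAlt_left (WAlt_tail ha1)) hc1
      have hrest : ∀ w, WCent φ Alg w → ∃ a ∈ A₁, ∃ L : List (B × B),
          (∀ p ∈ L, p.1 ∈ F₁ ∧ p.2 ∈ A₁) ∧ wval w = a * (L.map fun p => p.1 * p.2).prod := by
        intro w hc
        induction w with
        | nil => exact ⟨1, A₁.one_mem, [], by simp, by simp⟩
        | cons x w ih =>
          rw [WCent_cons] at hc
          obtain ⟨a, ha, L, hL, he⟩ := ih hc.2
          rcases x with ⟨_ | i, x⟩
          · refine ⟨1, A₁.one_mem, (x, a) :: L, ?_, ?_⟩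
            · intro p hp
              rcases List.mem_cons.1 hp with rfl | hp
              · exact ⟨hnone1 x hc.1.1 hc.1.2, ha⟩
              · exact hL p hp
            · simp [he, mul_assoc]
          · exact ⟨x * a, A₁.mul_mem (hAiA1 i x hc.1.1) ha, L, hL, by simp [he, mul_assoc]⟩
      obtain ⟨a2, ha2, L, hL, he⟩ := hrest l2 hc2
      have := cam_zero hcam (wval l0) f1 (wval l1) f2 a2 L (hvalA _ hc0 h0) hf1'
        (hvalA _ hc1 h1) hf2' ha2 hL hz
      simp only [wval_append, wval_cons, he]
      rw [hφ'F _ (hFmulL _ _ (hFmulR _ _ (hF1F f1 hf1')))]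
      rw [← this]
      simp only [mul_assoc]
    · intro l0 f l1 ha hc h0 h1
      rw [WCent_append, WCent_cons] at hc
      have hf' := hnone1 f hc.2.1.1 hc.2.1.2
      simp only [wval_append, wval_cons]
      rw [hφ'F _ (hFmulL _ _ (hFmulR _ _ (hF1F f hf'))), hφ'F _ (hF1F f hf')]
      exact cam_one hcam _ _ _ (hvalA _ hc.1 h0) hf' (hvalA _ hc.2.2 h1)
  · rintro ⟨hfree, hinf⟩
    rw [infL_iff A F hFmulL hFmulR φ φ' hφ1 hφF hφ'A Alg hmul hA hFn hfree] at hinf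
    obtain ⟨hz, ho⟩ := hinf
    have hfr : IsFreeFamily φ (fun i => (Ai i : Set B)) := by
      rw [free_iff] at hfree ⊢
      intro w hne ha hc
      rw [← up_val]
      exact hfree (up w) (by simpa [up] using hne) ((up_alt w).2 ha) ((up_cent w).2 hc)
    refine ⟨hfr, ?_⟩
    have hspan : ∀ a ∈ A₁, a ∈ Submodule.span ℂ
        {y | ∃ w, WAlt w ∧ WCent φ Alg w ∧ cnt w = 0 ∧ y = wval w} := by
      intro a ha
      have := mem_span_words φ hφ1 (fun i => (Ai i : Set B)) (fun i => hmul (some i))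
        (fun i x hx => hsub' (some i) x hx _) a ha
      refine Submodule.span_mono ?_ this
      rintro y ⟨w, h1, h2, rfl⟩
      exact ⟨up w, (up_alt w).2 h1, (up_cent w).2 h2, up_cnt w, (up_val w).symm⟩
    have hchain : ∀ l : List (Option ι × B), cnt l = 0 → ∀ (f : B), WAlt l → ∀ l',
        WAlt ((none, f) :: l') → WAlt (l ++ (none, f) :: l') := by
      intro l h0 f hl l' hl'
      refine List.isChain_append.2 ⟨hl, hl', ?_⟩
      intro x hx y hy
      simp at hy
      subst hy
      obtain ⟨v, rfl⟩ := up_surj l h0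
      have := List.mem_of_getLast? hx
      simp only [up, List.mem_map] at this
      obtain ⟨p, -, rfl⟩ := this
      simp
    have hcons : ∀ l : List (Option ι × B), WAlt l → (∀ y ∈ l.head?, y.1 ≠ none) →
        ∀ f : B, WAlt ((none, f) :: l) := by
      intro l hl h f
      exact List.isChain_cons.2 ⟨fun y hy => (h y hy).symm, hl⟩
    have hhead : ∀ l : List (Option ι × B), cnt l = 0 → ∀ y ∈ l.head?, y.1 ≠ none := by
      intro l h0 y hy
      obtain ⟨v, rfl⟩ := up_surj l h0
      have := List.mem_of_head? hy
      simp only [up, List.mem_map] at this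
      obtain ⟨p, -, rfl⟩ := this
      simp
    have hcf : ∀ f ∈ F₁, ∀ l, WCent φ Alg l → WCent φ Alg ((none, f) :: l) :=
      fun f hf l hl => WCent_cons.2 ⟨⟨hF1none f hf, hF1φ f hf⟩, hl⟩
    refine cam_of A₁ F₁ (Algebra.adjoin ℂ (⋃ o, Alg o)) ?_ ?_ ?_ ?_
    · intro a ha
      refine Algebra.adjoin_mono ?_ ha
      exact Set.iUnion_subset fun i => Set.subset_iUnion Alg (some i)
    · intro f hf
      exact Algebra.subset_adjoin (Set.mem_iUnion.2 ⟨none, hF1none f hf⟩)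
    · intro a0 ha0 f hf a1 ha1
      have key : φ' (a0 * (f * a1)) = φ (a0 * a1) * φ' f := by
        have h0 := hspan a0 ha0
        have h1 := hspan a1 ha1
        clear ha0 ha1
        induction h0 using Submodule.span_induction with
        | zero => simp
        | add x y _ _ hx hy => simp only [add_mul, map_add, hx, hy]
        | smul c x _ hx => simp only [smul_mul_assoc, map_smul, hx, smul_eq_mul, mul_assoc]
        | mem x hx =>
          obtain ⟨w, ha, hc, hw, rfl⟩ := hx
          induction h1 using Submodule.span_induction with
          | zero => simp
          | add x y _ _ hx hy => simp only [add_mul, mul_add, map_add, hx, hy]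
          | smul c x _ hx => simp only [mul_smul_comm, map_smul, hx, smul_eq_mul, mul_assoc]
          | mem x hx =>
            obtain ⟨v, hva, hvc, hv, rfl⟩ := hx
            have := ho w f v (hchain w hw f ha v (hcons v hva (hhead v hv) f))
              (WCent_append.2 ⟨hc, hcf f hf v hvc⟩) hw hv
            simpa using this
      rwa [hφ'F _ (hFmulL _ _ (hFmulR _ _ (hF1F f hf))), hφ'F _ (hF1F f hf)] at key
    · intro a0 ha0 f1 hf1 a1 ha1 f2 hf2 t ht
      have key : φ' (a0 * (f1 * (a1 * (f2 * t)))) = φ a1 * φ' (a0 * (f1 * (f2 * t))) := by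
        have h0 := hspan a0 ha0
        have h1 := hspan a1 ha1
        have h2 := mem_span_words φ hφ1 Alg hmul (fun o x hx => hsub' o x hx _) t ht
        clear ha0 ha1 ht
        induction h0 using Submodule.span_induction with
        | zero => simp
        | add x y _ _ hx hy => simp only [add_mul, map_add, hx, hy, mul_add]
        | smul c x _ hx => simp only [smul_mul_assoc, map_smul, hx, smul_eq_mul]; ring
        | mem x hx =>
          obtain ⟨w, ha, hc, hw, rfl⟩ := hx
          induction h1 using Submodule.span_induction with
          | zero => simp
          | add x y _ _ hx hy => simp only [add_mul, mul_add, map_add, hx, hy]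
          | smul c x _ hx =>
            simp only [smul_mul_assoc, mul_smul_comm, map_smul, hx, smul_eq_mul]; ring
          | mem x hx =>
            obtain ⟨v, hva, hvc, hv, rfl⟩ := hx
            by_cases hvn : v = []
            · subst hvn
              simp [hφ1]
            have hφv : φ (wval v) = 0 := (free_iff _ _).1 hfree v hvn hva hvc
            rw [hφv, zero_mul]
            have fin : ∀ f ∈ F₁, ∀ l, WAlt ((none, f) :: l) → WCent φ Alg l →
                φ' (wval w * (f1 * (wval v * (f * wval l)))) = 0 := by
              intro f hf l hl hlc
              have halt : WAlt (v ++ (none, f) :: l) := hchain v hv f hva l hl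
              have := hz (w ++ (none, f1) :: (v ++ (none, f) :: l))
                (hchain w hw f1 ha _ (hcons _ halt (by
                  intro y hy
                  refine hhead v hv y ?_
                  cases v with
                  | nil => exact absurd rfl hvn
                  | cons z v => simpa using hy) f1))
                (WCent_append.2 ⟨hc, hcf f1 hf1 _ (WCent_append.2 ⟨hvc, hcf f hf l hlc⟩)⟩)
                (by simp; omega)
              simpa using this
            induction h2 using Submodule.span_induction with
            | zero => simp
            | add x y _ _ hx hy => simp only [mul_add, map_add, hx, hy, add_zero]
            | smul c x _ hx => simp only [mul_smul_comm, map_smul, hx, smul_zero]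
            | mem x hx =>
              obtain ⟨l, hla, hlc, rfl⟩ := hx
              by_cases hl : ∀ y ∈ l.head?, y.1 ≠ none
              · exact fin f2 hf2 l (hcons l hla hl f2) hlc
              · cases l with
                | nil => simp at hl
                | cons y l =>
                  simp at hl
                  rcases y with ⟨o, y⟩
                  simp only at hl
                  subst hl
                  rw [WCent_cons] at hlc
                  have := fin (f2 * y) (F₁.mul_mem hf2 (hnone1 y hlc.1.1 hlc.1.2)) l
                    (WAlt_relabel hla rfl) hlc.2
                  simpa [mul_assoc] using this
      rwa [hφ'F _ (hFmulL _ _ (hFmulR _ _ (hF1F f1 hf1))),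
        hφ'F _ (hFmulL _ _ (hFmulR _ _ (hF1F f1 hf1)))] at key

end TypeBPrime
end
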